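/- arXiv:1412.7363 — 4 statements merged into one kernel-verified Lean document; each statement's English description precedes it below -/
import Mathlib

section
/- Let b, c be positive integers with q = gcd(b,c), let p > 1 be an integer, and let χ₁, χ₂ be non-principal primitive Dirichlet characters of the same modulus k satisfying (−1)^{p+1}·χ₁(−1)·χ₂(−1) = 1. Then (p+1)·( b·c^p·s_p(b,c:χ₁,χ₂) + c·b^p·s_p(c,b: χ̄₂, χ̄₁) ) = Σ_{j=0}^{p+1} C(p+1,j)·b^j·c^{p+1−j}·B_{j,χ̄₁}·B_{p+1−j,χ₂} + p·q^{p+1}·k^{p−1}·Σ_{h=1}^{k−1} Σ_{a=1}^{k−1} χ₁(h)·χ̄₂(a)·B̄_{p+1}((c·a+b·h)/(q·k)). -/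
open Finset

/-- The `n`-th Bernoulli polynomial evaluated at a real number. -/
noncomputable def BPoly (n : ℕ) (x : ℝ) : ℝ :=
  Polynomial.eval x ((Polynomial.bernoulli n).map (algebraMap ℚ ℝ))

open scoped Classical in
/-- The `n`-th Bernoulli function `B̄ₙ`. -/
noncomputable def BFun (n : ℕ) (x : ℝ) : ℝ :=
  if n = 1 then (if ∃ m : ℤ, x = (m : ℝ) then 0 else x - ⌊x⌋ - 1/2)
  else BPoly n (Int.fract x)

/-- The generalized Bernoulli function `B̄_{m,χ}` attached to a Dirichlet character. -/
noncomputable def BFunChar {k : ℕ} (χ : DirichletCharacter ℂ k) (m : ℕ) (x : ℝ) : ℂ :=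
  (k : ℂ) ^ ((m : ℤ) - 1) *
    ∑ n ∈ Finset.Icc 1 (k - 1), (starRingEnd ℂ) (χ (n : ZMod k)) * ((BFun m (((n : ℝ) + x) / k)) : ℂ)

/-- The generalized Bernoulli number `B_{m,χ} = B̄_{m,χ}(0)`. -/
noncomputable def BNumChar {k : ℕ} (χ : DirichletCharacter ℂ k) (m : ℕ) : ℂ := BFunChar χ m 0

/-- The complex conjugate of a Dirichlet character. -/
noncomputable def conjChar {k : ℕ} (χ : DirichletCharacter ℂ k) : DirichletCharacter ℂ k :=
  χ.ringHomComp (starRingEnd ℂ)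

/-- The character Dedekind sum `s_p(b,c : χ₁, χ₂)` for characters of the same modulus. -/
noncomputable def sChar {k : ℕ} (p b c : ℕ) (χ₁ χ₂ : DirichletCharacter ℂ k) : ℂ :=
  ∑ n ∈ Finset.range (c * k),
    χ₁ (n : ZMod k) * BFunChar χ₂ p (((b : ℝ) * n) / c) * ((BFun 1 ((n : ℝ) / (c * k))) : ℂ)

open PowerSeries in
lemma BP_gen (x : ℝ) : (PowerSeries.mk (fun n => BPoly n x / (n.factorial : ℝ))) * (exp ℝ - 1)
    = PowerSeries.X * rescale x (exp ℝ) := by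
  rw [← Polynomial.bernoulli_generating_function x]
  congr 2
  ext n
  simp only [BPoly, map_smul, Polynomial.eval_map_algebraMap, one_div, Algebra.smul_def]
  simp [div_eq_inv_mul]

lemma BP_one_add (n : ℕ) (x : ℝ) : BPoly n (1 + x) = BPoly n x + n * x ^ (n - 1) := by
  have h := congrArg (Polynomial.aeval x) (Polynomial.bernoulli_comp_one_add_X n)
  simp only [Polynomial.aeval_comp, map_add, map_one, Polynomial.aeval_X, map_smul, map_pow] at h
  simp only [BPoly, Polynomial.eval_map_algebraMap, h]
  simp [Algebra.smul_def]

lemma BP_zero (x : ℝ) : BPoly 0 x = 1 := by simp [BPoly]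
lemma BP_one (x : ℝ) : BPoly 1 x = x - 1/2 := by simp [BPoly]

open PowerSeries in
lemma exp_sub_ne : (exp ℝ - 1) ≠ 0 := by
  intro h
  have := congrArg (coeff 1) h
  simp [coeff_exp, PowerSeries.coeff_one] at this

open PowerSeries in
lemma d_rescale_exp (z : ℝ) : d⁄dX ℝ (rescale z (exp ℝ)) = C z * rescale z (exp ℝ) := by
  ext n
  rw [coeff_derivative, coeff_C_mul, coeff_rescale, coeff_rescale, coeff_exp, coeff_exp]
  have : ((n.factorial : ℝ)) ≠ 0 := by positivity
  simp [Nat.factorial_succ]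
  field_simp
  ring

open PowerSeries in
lemma BP_conv_ps (x y : ℝ) :
    (PowerSeries.mk (fun n => BPoly n x / (n.factorial : ℝ))) *
    (PowerSeries.mk (fun n => BPoly n y / (n.factorial : ℝ))) =
    C (x + y - 1) * X * (PowerSeries.mk (fun n => BPoly n (x+y) / (n.factorial : ℝ)))
    + (PowerSeries.mk (fun n => BPoly n (x+y) / (n.factorial : ℝ)))
    - X * d⁄dX ℝ (PowerSeries.mk (fun n => BPoly n (x+y) / (n.factorial : ℝ))) := by
  have hx := BP_gen x
  have hy := BP_gen y
  have hz := BP_gen (x+y)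
  have he := exp_mul_exp_eq_exp_add (A := ℝ) x y
  set F := PowerSeries.mk (fun n => BPoly n x / (n.factorial : ℝ))
  set G := PowerSeries.mk (fun n => BPoly n y / (n.factorial : ℝ))
  set H := PowerSeries.mk (fun n => BPoly n (x+y) / (n.factorial : ℝ))
  have hd := congrArg (d⁄dX ℝ) hz
  rw [Derivation.leibniz, Derivation.leibniz, d_rescale_exp, map_sub, derivative_exp] at hd
  simp only [smul_eq_mul, derivative_X, Derivation.map_one_eq_zero, sub_zero] at hd
  apply mul_right_cancel₀ exp_sub_ne
  apply mul_right_cancel₀ exp_sub_ne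
  set e := exp ℝ
  have hC : C (x + y - 1) = C (x+y) - (1 : ℝ⟦X⟧) := by simp
  rw [hC]
  set E := rescale (x+y) e
  linear_combination (G * (e-1)) * hx + X * rescale x e * hy + X^2 * he
    - ((C (x+y) - 1) * X * (e-1) + (e-1)) * hz + X * (e-1) * hd - X * e * hz

lemma BP_conv (n : ℕ) (x y : ℝ) :
    ∑ j ∈ range (n + 2), ((n+1).choose j : ℝ) * BPoly j x * BPoly (n + 1 - j) y =
    (n + 1) * (x + y - 1) * BPoly n (x + y) - n * BPoly (n+1) (x+y) := by
  have h := congrArg (PowerSeries.coeff (n+1)) (BP_conv_ps x y)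
  rw [map_sub, map_add, mul_assoc, PowerSeries.coeff_C_mul, PowerSeries.coeff_succ_X_mul,
    PowerSeries.coeff_succ_X_mul, PowerSeries.coeff_mul, PowerSeries.coeff_derivative,
    Finset.Nat.sum_antidiagonal_eq_sum_range_succ_mk] at h
  simp only [PowerSeries.coeff_mk] at h
  have hf : (n.factorial : ℝ) ≠ 0 := by positivity
  have h2 := congrArg (fun t => ((n+1).factorial : ℝ) * t) h
  simp only [Finset.mul_sum] at h2
  rw [Finset.sum_congr rfl (g := fun j => ((n+1).choose j : ℝ) * BPoly j x * BPoly (n + 1 - j) y)] at h2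
  · rw [h2, Nat.factorial_succ]
    push_cast
    field_simp
    ring
  · intro j hj
    rw [Nat.cast_choose ℝ (by simp at hj; omega : j ≤ n+1)]
    have h1 : (j.factorial : ℝ) ≠ 0 := by positivity
    have h2 : ((n+1-j).factorial : ℝ) ≠ 0 := by positivity
    field_simp

open PowerSeries in
lemma BP_raabe (n c : ℕ) (hc : 0 < c) (x : ℝ) :
    (c : ℝ) ^ n * ∑ m ∈ range c, BPoly n ((x + m) / c) = c * BPoly n x := by
  have hc' : (c : ℝ) ≠ 0 := by positivity
  have key : ∑ m ∈ range c, rescale (c:ℝ) (PowerSeries.mk (fun n => BPoly n ((x + m) / c) / (n.factorial : ℝ)))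
      = C (c:ℝ) * PowerSeries.mk (fun n => BPoly n x / (n.factorial : ℝ)) := by
    have h0 : rescale (c:ℝ) (exp ℝ - 1) ≠ 0 := by
      intro h
      rw [← map_zero (rescale (c:ℝ))] at h
      exact exp_sub_ne (rescale_injective hc' h)
    apply mul_right_cancel₀ h0
    apply mul_right_cancel₀ exp_sub_ne
    have hg : (∑ m ∈ range c, rescale (m:ℝ) (exp ℝ)) * (exp ℝ - 1) = rescale (c:ℝ) (exp ℝ - 1) := by
      have := geom_sum_mul (exp ℝ) c
      simp only [exp_pow_eq_rescale_exp] at this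
      rw [this]; simp
    rw [Finset.sum_mul]
    have : ∀ m ∈ range c, rescale (c:ℝ) (PowerSeries.mk (fun n => BPoly n ((x + m) / c) / (n.factorial : ℝ))) * rescale (c:ℝ) (exp ℝ - 1)
       = C (c:ℝ) * X * rescale x (exp ℝ) * rescale (m:ℝ) (exp ℝ) := by
      intro m _
      rw [← map_mul, BP_gen, map_mul, rescale_X, rescale_rescale, mul_assoc _ (rescale x _),
        exp_mul_exp_eq_exp_add, div_mul_cancel₀ _ hc']
    rw [Finset.sum_congr rfl this, ← Finset.mul_sum, mul_assoc, hg]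
    linear_combination (- C (c:ℝ) * rescale (c:ℝ) (exp ℝ - 1)) * BP_gen x
  have h := congrArg (coeff n) key
  rw [map_sum, coeff_C_mul] at h
  simp only [coeff_rescale, coeff_mk] at h
  have hf : (n.factorial : ℝ) ≠ 0 := by positivity
  rw [← Finset.mul_sum, ← Finset.sum_div] at h
  field_simp at h
  linarith

lemma sum_affine (c : ℕ) (hc : 0 < c) (u s : ℤ) (hu : IsCoprime u (c : ℤ)) (g : ℤ → ℝ)
    (hg : Function.Periodic g (c : ℤ)) :
    ∑ m ∈ range c, g (u * m + s) = ∑ m ∈ range c, g m := by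
  haveI : NeZero c := ⟨hc.ne'⟩
  let G : ZMod c → ℝ := fun z => g (z.val : ℤ)
  have hG : ∀ i : ℤ, g i = G (i : ZMod c) := by
    intro i
    simp only [G]
    rw [ZMod.val_intCast]
    have := hg.int_mul (i / c) (i % c)
    rw [← this]
    congr 1
    have := Int.emod_add_mul_ediv i c
    rw [mul_comm]
    simpa using this.symm
  have hr : ∀ F : ZMod c → ℝ, ∑ m ∈ range c, F (m : ZMod c) = ∑ z : ZMod c, F z := by
    intro F
    refine Finset.sum_nbij' (fun m => (m : ZMod c)) ZMod.val ?_ ?_ ?_ ?_ ?_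
    · intros; simp
    · intro a _; simpa using ZMod.val_lt a
    · intro a ha; exact ZMod.val_cast_of_lt (by simpa using ha)
    · intro a _; simp
    · intros; rfl
  have h1 : ∑ m ∈ range c, g (u * m + s) = ∑ z : ZMod c, G (u * z + s) := by
    rw [← hr (fun z => G (u * z + s))]
    refine Finset.sum_congr rfl fun m _ => ?_
    rw [hG]; push_cast; rfl
  have h2 : ∑ m ∈ range c, g m = ∑ z : ZMod c, G z := by
    rw [← hr]
    refine Finset.sum_congr rfl fun m _ => ?_
    rw [hG]; push_cast; rfl
  rw [h1, h2]
  obtain ⟨a, d, had⟩ := hu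
  have had' : (a : ZMod c) * u = 1 := by
    have := congrArg (fun i : ℤ => (i : ZMod c)) had
    simpa using this
  have hinj : Function.Injective (fun z : ZMod c => (u : ZMod c) * z + s) := by
    intro z w h
    have h' : (u : ZMod c) * z = u * w := by simpa using h
    have := congrArg (fun t => (a : ZMod c) * t) h'
    simpa [← mul_assoc, had'] using this
  exact Fintype.sum_bijective _ (Finite.injective_iff_bijective.mp hinj) _ _ (fun _ => rfl)

noncomputable def PF (n : ℕ) (x : ℝ) : ℝ := BPoly n (Int.fract x)

lemma PF_add_int (n : ℕ) (x : ℝ) (m : ℤ) : PF n (x + m) = PF n x := by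
  simp [PF]

lemma PF_of_mem (n : ℕ) (x : ℝ) (h0 : 0 ≤ x) (h1 : x < 1) : PF n x = BPoly n x := by
  rw [PF, Int.fract_eq_self.mpr ⟨h0, h1⟩]

lemma BFun_eq_PF (n : ℕ) (hn : n ≠ 1) (x : ℝ) : BFun n x = PF n x := by
  simp [BFun, PF, hn]

lemma BFun_of_mem (n : ℕ) (x : ℝ) (h0 : 0 < x) (h1 : x < 1) : BFun n x = BPoly n x := by
  by_cases hn : n = 1
  · subst hn
    have hf : ⌊x⌋ = 0 := Int.floor_eq_zero_iff.mpr ⟨h0.le, h1⟩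
    have : ¬ ∃ m : ℤ, x = m := by
      rintro ⟨m, rfl⟩
      have a : 0 < m := by exact_mod_cast h0
      have b : m < 1 := by exact_mod_cast h1
      omega
    rw [BP_one]
    simp only [BFun, if_neg this, hf]
    simp
  · rw [BFun_eq_PF n hn, PF_of_mem n x h0.le h1]

lemma PF_raabe (n c : ℕ) (hc : 0 < c) (x : ℝ) :
    (c : ℝ) ^ n * ∑ m ∈ range c, PF n ((x + m) / c) = c * PF n x := by
  have hc' : (0 : ℝ) < c := by positivity
  have hper : Function.Periodic (fun i : ℤ => PF n ((Int.fract x + i) / c)) (c : ℤ) := by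
    intro i
    have : ((Int.fract x + ((i + (c:ℤ) : ℤ) : ℝ)) / c) = (Int.fract x + i) / c + ((1 : ℤ) : ℝ) := by
      push_cast; field_simp; ring
    simp only [this, PF_add_int]
  have h := sum_affine c hc 1 ⌊x⌋ isCoprime_one_left _ hper
  have h1 : ∑ m ∈ range c, PF n ((x + m) / c) = ∑ m ∈ range c, BPoly n ((Int.fract x + m) / c) := by
    convert h using 2 with m hm m hm
    · congr 2
      push_cast
      linarith [Int.fract_add_floor x]
    · have hm' : (m : ℝ) + 1 ≤ c := by
        have := Finset.mem_range.mp hm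
        exact_mod_cast this
      rw [PF_of_mem]
      · simp
      · have := Int.fract_nonneg x
        push_cast
        positivity
      · rw [div_lt_one hc']
        have := Int.fract_lt_one x
        push_cast
        linarith
  rw [h1, BP_raabe n c hc, PF]

lemma PF_add_raabe (n c : ℕ) (hc : 0 < c) (w y : ℝ) :
    (c : ℝ) ^ n * ∑ m ∈ range c, PF n (w + (y + m) / c) = c * PF n (c * w + y) := by
  have hc' : (c : ℝ) ≠ 0 := by positivity
  rw [← PF_raabe n c hc]
  congr 1
  refine Finset.sum_congr rfl fun m _ => ?_
  congr 1
  field_simp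
  ring

lemma conv_PF (p : ℕ) (hp : 1 < p) (x y : ℝ) (hx0 : 0 < x) (hx1 : x < 1) (hy0 : 0 < y) (hy1 : y < 1) :
    ∑ j ∈ range (p + 2), ((p+1).choose j : ℝ) * BPoly j x * BPoly (p + 1 - j) y =
    (p + 1) * PF p (x + y) * (BPoly 1 x + BPoly 1 y) - p * PF (p+1) (x+y) := by
  rw [BP_conv, BP_one, BP_one]
  by_cases h : x + y < 1
  · rw [PF_of_mem _ _ (by linarith) h, PF_of_mem _ _ (by linarith) h]; ring
  · obtain ⟨w, hw⟩ : ∃ w, x + y = 1 + w := ⟨x + y - 1, by ring⟩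
    have e : ∀ n, PF n (x + y) = BPoly n w := by
      intro n
      rw [hw, add_comm, show w + 1 = w + ((1:ℤ):ℝ) by simp, PF_add_int,
        PF_of_mem _ _ (by linarith) (by linarith)]
    rw [e, e, hw, BP_one_add, BP_one_add]
    obtain ⟨r, rfl⟩ : ∃ r, p = r + 1 := ⟨p - 1, by omega⟩
    have : y = 1 + w - x := by linarith
    subst this
    simp only [Nat.add_sub_cancel]
    push_cast
    ring

lemma sum_range_mul' {M : Type*} [AddCommMonoid M] (c k : ℕ) (F : ℕ → M) :
    ∑ n ∈ range (c * k), F n = ∑ m ∈ range c, ∑ h ∈ range k, F (h + k * m) := by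
  induction c with
  | zero => simp
  | succ c ih =>
    rw [Nat.succ_mul, Finset.sum_range_add, ih, Finset.sum_range_succ]
    congr 1
    refine Finset.sum_congr rfl fun h _ => ?_
    congr 1; ring

lemma sum_gcd (n b c q : ℕ) (hb : 0 < b) (hq : q = Nat.gcd b c) (u : ℝ) :
    (b : ℝ) ^ n * ∑ l ∈ range b, PF n ((u + c * l) / b) = b * q ^ n * PF n (u / q) := by
  have hq0 : 0 < q := hq ▸ Nat.gcd_pos_of_pos_left c hb
  obtain ⟨b', c', hcop, hb', hc'⟩ : ∃ b' c', Nat.Coprime b' c' ∧ b = b' * q ∧ c = c' * q := by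
    subst hq; exact Nat.exists_coprime b c
  have hb0 : 0 < b' := by
    rcases Nat.eq_zero_or_pos b' with h | h
    · simp [h] at hb'; omega
    · exact h
  have hqr : (q : ℝ) ≠ 0 := by positivity
  have hbr : (b' : ℝ) ≠ 0 := by positivity
  have hper : Function.Periodic (fun i : ℤ => PF n ((u / q + i) / b')) (b' : ℤ) := by
    intro i
    have : ((u / q + ((i + (b':ℤ) : ℤ) : ℝ)) / b') = (u / q + i) / b' + ((1 : ℤ) : ℝ) := by
      push_cast; field_simp; ring
    simp only [this, PF_add_int]
  have hcop' : IsCoprime (c' : ℤ) (b' : ℤ) := Nat.isCoprime_iff_coprime.mpr hcop.symm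
  have h1 : ∑ l ∈ range b, PF n ((u + c * l) / b) = q * ∑ m ∈ range b', PF n ((u / q + m) / b') := by
    rw [hb', mul_comm b' q, sum_range_mul']
    rw [Finset.sum_congr rfl (g := fun _ => ∑ m ∈ range b', PF n ((u / q + m) / b'))]
    · simp
    · intro m _
      have := sum_affine b' hb0 c' (c' * b' * m) hcop' _ hper
      have hper2 : ∀ h : ℕ, PF n ((u + (c:ℝ) * ((h + b' * m : ℕ) : ℝ)) / ((q * b' : ℕ) : ℝ))
          = PF n ((u / q + ((c' * h + c' * b' * m : ℤ) : ℝ)) / b') := by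
        intro h
        congr 1
        rw [hc']
        push_cast
        field_simp
      simp only [hper2]
      simpa using this
  rw [h1]
  have h2 := PF_raabe n b' hb0 (u / q)
  rw [hb']
  push_cast
  linear_combination (q:ℝ) * (q:ℝ)^n * h2

lemma core (b c q p : ℕ) (hb : 0 < b) (hc : 0 < c) (hq : q = Nat.gcd b c) (hp : 1 < p)
    (x y : ℝ) (hx0 : 0 < x) (hx1 : x < 1) (hy0 : 0 < y) (hy1 : y < 1) :
    ((p:ℝ) + 1) * (b * c ^ p * ∑ m ∈ range c, BFun p (b * ((x + m) / c) + y) * BFun 1 ((x + m) / c)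
      + c * b ^ p * ∑ l ∈ range b, BFun p (c * ((y + l) / b) + x) * BFun 1 ((y + l) / b))
    = ∑ j ∈ range (p + 2), ((p+1).choose j : ℝ) * b ^ j * c ^ (p + 1 - j) * BFun j x * BFun (p + 1 - j) y
      + p * q ^ (p + 1) * BFun (p + 1) ((c * y + b * x) / q) := by
  have hb' : (0:ℝ) < b := by positivity
  have hc' : (0:ℝ) < c := by positivity
  have frac : ∀ (d : ℕ) (t : ℝ), 0 < d → 0 < t → t < 1 → ∀ m ∈ range d,
      0 < (t + m) / d ∧ (t + m) / d < 1 := by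
    intro d t hd h0 h1 m hm
    have hd' : (0:ℝ) < d := by positivity
    have hm' : (m : ℝ) + 1 ≤ d := by
      have := Finset.mem_range.mp hm
      exact_mod_cast this
    exact ⟨by positivity, by rw [div_lt_one hd']; linarith⟩
  have B1 : ∀ m ∈ range c, BFun p (b * ((x + m) / c) + y) * BFun 1 ((x + m) / c)
      = PF p (b * ((x + m) / c) + y) * BPoly 1 ((x + m) / c) := fun m hm => by
    rw [BFun_eq_PF p (by omega), BFun_of_mem 1 _ (frac c x hc hx0 hx1 m hm).1 (frac c x hc hx0 hx1 m hm).2]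
  have B2 : ∀ m ∈ range b, BFun p (c * ((y + m) / b) + x) * BFun 1 ((y + m) / b)
      = PF p (c * ((y + m) / b) + x) * BPoly 1 ((y + m) / b) := fun m hm => by
    rw [BFun_eq_PF p (by omega), BFun_of_mem 1 _ (frac b y hb hy0 hy1 m hm).1 (frac b y hb hy0 hy1 m hm).2]
  rw [Finset.sum_congr rfl B1, Finset.sum_congr rfl B2, BFun_eq_PF (p+1) (by omega)]
  have T : ∑ j ∈ range (p + 2), ((p+1).choose j : ℝ) * b ^ j * c ^ (p + 1 - j) * BFun j x * BFun (p + 1 - j) y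
      = (b:ℝ) ^ p * c ^ p * ∑ m ∈ range c, ∑ l ∈ range b,
        ∑ j ∈ range (p + 2), ((p+1).choose j : ℝ) * BPoly j ((x + m) / c) * BPoly (p + 1 - j) ((y + l) / b) := by
    have sw : ∑ m ∈ range c, ∑ l ∈ range b,
        ∑ j ∈ range (p + 2), ((p+1).choose j : ℝ) * BPoly j ((x + m) / c) * BPoly (p + 1 - j) ((y + l) / b)
        = ∑ j ∈ range (p + 2), ((p+1).choose j : ℝ) * (∑ m ∈ range c, BPoly j ((x + m) / c)) *
          ∑ l ∈ range b, BPoly (p + 1 - j) ((y + l) / b) := by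
      rw [Finset.sum_congr rfl (fun m _ => Finset.sum_comm), Finset.sum_comm]
      refine Finset.sum_congr rfl fun j _ => ?_
      rw [mul_assoc, Finset.sum_mul_sum, Finset.mul_sum]
      refine Finset.sum_congr rfl fun m _ => ?_
      rw [Finset.mul_sum]
      refine Finset.sum_congr rfl fun l _ => ?_
      ring
    rw [sw, Finset.mul_sum]
    refine Finset.sum_congr rfl fun j hj => ?_
    have hj' : j ≤ p + 1 := by have := Finset.mem_range.mp hj; omega
    rw [BFun_of_mem j x hx0 hx1, BFun_of_mem _ y hy0 hy1]
    have r1 := BP_raabe j c hc x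
    have r2 := BP_raabe (p+1-j) b hb y
    set S := ∑ m ∈ range c, BPoly j ((x + m) / c)
    set R := ∑ l ∈ range b, BPoly (p+1-j) ((y + l) / b)
    have e1 : (c:ℝ) ^ p * c = c ^ j * c ^ (p+1-j) := by rw [← pow_add, ← pow_succ]; congr 1; omega
    have e2 : (b:ℝ) ^ p * b = b ^ j * b ^ (p+1-j) := by rw [← pow_add, ← pow_succ]; congr 1; omega
    have hbc : (b:ℝ) * c ≠ 0 := by positivity
    apply mul_left_cancel₀ hbc
    linear_combination (-((p+1).choose j : ℝ) * b ^ j * c ^ (p+1-j)) * (r1 * b * BPoly (p+1-j) y + c^j * S * r2)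
     - ((p+1).choose j : ℝ) * S * R * (b^p * b * e1 + c ^ j * c ^ (p+1-j) * e2)
  have V : ∑ m ∈ range c, ∑ l ∈ range b,
        ∑ j ∈ range (p + 2), ((p+1).choose j : ℝ) * BPoly j ((x + m) / c) * BPoly (p + 1 - j) ((y + l) / b)
      = (p + 1) * (∑ m ∈ range c, (∑ l ∈ range b, PF p ((x + m) / c + (y + l) / b)) * BPoly 1 ((x + m) / c))
      + (p + 1) * (∑ l ∈ range b, (∑ m ∈ range c, PF p ((y + l) / b + (x + m) / c)) * BPoly 1 ((y + l) / b))
      - p * ∑ l ∈ range b, ∑ m ∈ range c, PF (p+1) ((y + l) / b + (x + m) / c) := by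
    have : ∀ m ∈ range c, ∀ l ∈ range b, ∑ j ∈ range (p + 2), ((p+1).choose j : ℝ) * BPoly j ((x + m) / c) * BPoly (p + 1 - j) ((y + l) / b)
       = (p+1) * (PF p ((x + m) / c + (y + l) / b) * BPoly 1 ((x + m) / c))
        + (p+1) * (PF p ((y + l) / b + (x + m) / c) * BPoly 1 ((y + l) / b))
        - p * PF (p+1) ((y + l) / b + (x + m) / c) := by
      intro m hm l hl
      rw [conv_PF p hp _ _ (frac c x hc hx0 hx1 m hm).1 (frac c x hc hx0 hx1 m hm).2
        (frac b y hb hy0 hy1 l hl).1 (frac b y hb hy0 hy1 l hl).2, add_comm ((y + l) / (b:ℝ))]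
      ring
    rw [Finset.sum_congr rfl (fun m hm => Finset.sum_congr rfl (this m hm))]
    simp only [Finset.sum_sub_distrib, Finset.sum_add_distrib, ← Finset.mul_sum, Finset.sum_mul]
    congr 1
    · congr 2
      exact Finset.sum_comm
    · congr 1
      exact Finset.sum_comm
  have W1 : (b:ℝ) ^ p * (∑ m ∈ range c, (∑ l ∈ range b, PF p ((x + m) / c + (y + l) / b)) * BPoly 1 ((x + m) / c))
      = b * ∑ m ∈ range c, PF p (b * ((x + m) / c) + y) * BPoly 1 ((x + m) / c) := by
    rw [Finset.mul_sum, Finset.mul_sum]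
    refine Finset.sum_congr rfl fun m _ => ?_
    rw [← mul_assoc, PF_add_raabe p b hb, mul_assoc]
  have W2 : (c:ℝ) ^ p * (∑ l ∈ range b, (∑ m ∈ range c, PF p ((y + l) / b + (x + m) / c)) * BPoly 1 ((y + l) / b))
      = c * ∑ l ∈ range b, PF p (c * ((y + l) / b) + x) * BPoly 1 ((y + l) / b) := by
    rw [Finset.mul_sum, Finset.mul_sum]
    refine Finset.sum_congr rfl fun m _ => ?_
    rw [← mul_assoc, PF_add_raabe p c hc, mul_assoc]
  have W3 : (c:ℝ) ^ (p+1) * ∑ l ∈ range b, ∑ m ∈ range c, PF (p+1) ((y + l) / b + (x + m) / c)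
      = c * ∑ l ∈ range b, PF (p+1) ((c * y + b * x + c * l) / b) := by
    rw [Finset.mul_sum, Finset.mul_sum]
    refine Finset.sum_congr rfl fun m _ => ?_
    rw [PF_add_raabe (p+1) c hc]
    congr 2
    field_simp
    ring
  have W4 := sum_gcd (p+1) b c q hb hq (c * y + b * x)
  rw [T, V]
  set S1 := ∑ m ∈ range c, (∑ l ∈ range b, PF p ((x + m) / c + (y + l) / b)) * BPoly 1 ((x + m) / c)
  set S2 := ∑ l ∈ range b, (∑ m ∈ range c, PF p ((y + l) / b + (x + m) / c)) * BPoly 1 ((y + l) / b)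
  set S3 := ∑ l ∈ range b, ∑ m ∈ range c, PF (p+1) ((y + l) / b + (x + m) / c)
  set S4 := ∑ l ∈ range b, PF (p+1) ((c * y + b * x + c * l) / b)
  have W5 : (b:ℝ)^p * c^p * S3 = q^(p+1) * PF (p + 1) ((c * y + b * x) / q) := by
    have hbc : (b:ℝ) * c ≠ 0 := by positivity
    apply mul_left_cancel₀ hbc
    linear_combination (b:ℝ)^(p+1) * W3 + c * W4
  linear_combination (-(p+1) * (c:ℝ)^p) * W1 - (p+1) * (b:ℝ)^p * W2 + p * W5

lemma sum_range_eq_Icc {k : ℕ} (hk : 1 < k) (F : ℕ → ℂ) (h0 : F 0 = 0) :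
    ∑ h ∈ range k, F h = ∑ h ∈ Icc 1 (k - 1), F h := by
  symm
  apply Finset.sum_subset
  · intro i hi
    simp at hi ⊢
    omega
  · intro i hi hn
    have : i = 0 := by
      simp at hi hn
      omega
    rw [this, h0]

lemma char_zero {k : ℕ} (hk : 1 < k) (χ : DirichletCharacter ℂ k) : χ (0 : ZMod k) = 0 := by
  haveI : Fact (1 < k) := ⟨hk⟩
  exact χ.map_nonunit not_isUnit_zero

lemma sChar_eq {k : ℕ} (hk : 1 < k) (p b c : ℕ) (hp : 1 < p) (hc : 0 < c)
    (χ₁ χ₂ : DirichletCharacter ℂ k) :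
    sChar p b c χ₁ χ₂ = (k : ℂ) ^ (p - 1) * ∑ h ∈ Icc 1 (k - 1), ∑ a ∈ Icc 1 (k - 1),
      χ₁ (h : ZMod k) * (starRingEnd ℂ) (χ₂ (a : ZMod k)) *
      ((∑ m ∈ range c, BFun p (b * (((h : ℝ) / k + m) / c) + (a : ℝ) / k) *
        BFun 1 (((h : ℝ) / k + m) / c) : ℝ) : ℂ) := by
  have hk0 : (k : ℝ) ≠ 0 := by positivity
  have hc0 : (c : ℝ) ≠ 0 := by positivity
  have hz : (k : ℂ) ^ ((p : ℤ) - 1) = (k : ℂ) ^ (p - 1) := by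
    rw [← zpow_natCast]; congr 1; omega
  rw [sChar, sum_range_mul', Finset.sum_comm, sum_range_eq_Icc hk]
  · rw [Finset.mul_sum]
    refine Finset.sum_congr rfl fun h _ => ?_
    simp only [Complex.ofReal_sum, Finset.mul_sum]
    rw [Finset.sum_comm]
    refine Finset.sum_congr rfl fun m _ => ?_
    rw [BFunChar, hz, Finset.mul_sum, Finset.mul_sum, Finset.sum_mul]
    refine Finset.sum_congr rfl fun a _ => ?_
    have e1 : ((h + k * m : ℕ) : ZMod k) = (h : ZMod k) := by simp
    have e2 : ((a : ℝ) + (b : ℝ) * ((h + k * m : ℕ) : ℝ) / c) / k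
        = b * (((h : ℝ) / k + m) / c) + (a : ℝ) / k := by
      push_cast; field_simp; ring
    have e3 : ((h + k * m : ℕ) : ℝ) / (c * k) = ((h : ℝ) / k + m) / c := by
      push_cast; field_simp
    rw [e1, e2, e3]
    push_cast
    ring
  · refine Finset.sum_eq_zero fun m _ => ?_
    have e1 : ((0 + k * m : ℕ) : ZMod k) = 0 := by simp
    rw [e1, char_zero hk]
    simp

/-- Reciprocity formula for character Dedekind sums attached to two primitive
characters of the same modulus (Theorem 1.1). -/
theorem reciprocity_sChar (b c : ℕ) (hb : 0 < b) (hc : 0 < c) (q : ℕ) (hq : q = Nat.gcd b c)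
    (p : ℕ) (hp : 1 < p) (k : ℕ) [NeZero k] (χ₁ χ₂ : DirichletCharacter ℂ k)
    (h₁ : χ₁ ≠ 1) (h₂ : χ₂ ≠ 1) (hprim₁ : χ₁.IsPrimitive) (hprim₂ : χ₂.IsPrimitive)
    (hpar : (-1 : ℂ) ^ (p + 1) * χ₁ (-1) * χ₂ (-1) = 1) :
    ((p : ℂ) + 1) * ((b : ℂ) * (c : ℂ) ^ p * sChar p b c χ₁ χ₂
        + (c : ℂ) * (b : ℂ) ^ p * sChar p c b (conjChar χ₂) (conjChar χ₁)) =
      (∑ j ∈ Finset.range (p + 2), (Nat.choose (p + 1) j : ℂ) * (b : ℂ) ^ j *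
          (c : ℂ) ^ (p + 1 - j) * BNumChar (conjChar χ₁) j * BNumChar χ₂ (p + 1 - j))
      + (p : ℂ) * (q : ℂ) ^ (p + 1) * (k : ℂ) ^ (p - 1) *
          ∑ h ∈ Finset.Icc 1 (k - 1), ∑ a ∈ Finset.Icc 1 (k - 1),
            χ₁ (h : ZMod k) * (starRingEnd ℂ) (χ₂ (a : ZMod k)) *
              ((BFun (p + 1) (((c : ℝ) * a + (b : ℝ) * h) / (q * k))) : ℂ) := by
  have hk : 1 < k := by
    rcases Nat.lt_or_ge 1 k with h | h
    · exact h
    · exfalso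
      have hk1 : k = 1 := by
        have := NeZero.pos k
        omega
      subst hk1
      exact h₁ (DirichletCharacter.level_one χ₁)
  have hkc : (k : ℂ) ≠ 0 := by exact_mod_cast (by omega : k ≠ 0)
  have hkr : (0 : ℝ) < k := by exact_mod_cast (by omega : 0 < k)
  rw [sChar_eq hk p b c hp hc, sChar_eq hk p c b hp hb]
  have hsw : ∑ h ∈ Icc 1 (k - 1), ∑ a ∈ Icc 1 (k - 1),
      (conjChar χ₂) (h : ZMod k) * (starRingEnd ℂ) ((conjChar χ₁) (a : ZMod k)) *
      ((∑ m ∈ range b, BFun p (c * (((h : ℝ) / k + m) / b) + (a : ℝ) / k) *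
        BFun 1 (((h : ℝ) / k + m) / b) : ℝ) : ℂ)
      = ∑ h ∈ Icc 1 (k - 1), ∑ a ∈ Icc 1 (k - 1),
      χ₁ (h : ZMod k) * (starRingEnd ℂ) (χ₂ (a : ZMod k)) *
      ((∑ m ∈ range b, BFun p (c * (((a : ℝ) / k + m) / b) + (h : ℝ) / k) *
        BFun 1 (((a : ℝ) / k + m) / b) : ℝ) : ℂ) := by
    rw [Finset.sum_comm]
    refine Finset.sum_congr rfl fun h _ => Finset.sum_congr rfl fun a _ => ?_
    simp only [conjChar, MulChar.ringHomComp_apply, Complex.conj_conj]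
    ring
  rw [hsw]
  have hB : ∀ j ∈ range (p + 2), (Nat.choose (p + 1) j : ℂ) * (b : ℂ) ^ j *
          (c : ℂ) ^ (p + 1 - j) * BNumChar (conjChar χ₁) j * BNumChar χ₂ (p + 1 - j)
      = ∑ h ∈ Icc 1 (k - 1), ∑ a ∈ Icc 1 (k - 1), (k : ℂ) ^ (p - 1) *
        (χ₁ (h : ZMod k) * (starRingEnd ℂ) (χ₂ (a : ZMod k))) *
        (((p+1).choose j : ℝ) * b ^ j * c ^ (p + 1 - j) * BFun j ((h : ℝ) / k)
          * BFun (p + 1 - j) ((a : ℝ) / k) : ℝ) := by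
    intro j hj
    have hj' : j ≤ p + 1 := by have := Finset.mem_range.mp hj; omega
    have hpow : (k : ℂ) ^ ((j : ℤ) - 1) * (k : ℂ) ^ (((p + 1 - j : ℕ) : ℤ) - 1) = (k : ℂ) ^ (p - 1) := by
      rw [← zpow_add₀ hkc, ← zpow_natCast]
      congr 1
      omega
    simp only [BNumChar, BFunChar, conjChar, MulChar.ringHomComp_apply, Complex.conj_conj, add_zero]
    rw [← hpow]
    set A := (k : ℂ) ^ ((j : ℤ) - 1)
    set B := (k : ℂ) ^ (((p + 1 - j : ℕ) : ℤ) - 1)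
    have : ∀ S R : ℂ, (Nat.choose (p + 1) j : ℂ) * (b : ℂ) ^ j *
          (c : ℂ) ^ (p + 1 - j) * (A * S) * (B * R) = (Nat.choose (p + 1) j : ℂ) * (b : ℂ) ^ j *
          (c : ℂ) ^ (p + 1 - j) * A * B * (S * R) := by intros; ring
    rw [this, Finset.sum_mul_sum, Finset.mul_sum]
    refine Finset.sum_congr rfl fun h _ => ?_
    rw [Finset.mul_sum]
    refine Finset.sum_congr rfl fun a _ => ?_
    push_cast
    ring
  rw [Finset.sum_congr rfl hB, Finset.sum_comm (s := range (p + 2))]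
  simp only [Finset.mul_sum, ← Finset.sum_add_distrib]
  refine Finset.sum_congr rfl fun h hh => ?_
  rw [Finset.sum_comm (s := range (p + 2)), ← Finset.sum_add_distrib]
  refine Finset.sum_congr rfl fun a ha => ?_
  have mem : ∀ i ∈ Icc 1 (k - 1), 0 < (i : ℝ) / k ∧ (i : ℝ) / k < 1 := by
    intro i hi
    have hi' := Finset.mem_Icc.mp hi
    have h1 : (0 : ℝ) < i := by exact_mod_cast (by omega : 0 < i)
    have h2 : (i : ℝ) < k := by exact_mod_cast (by omega : i < k)
    exact ⟨by positivity, by rw [div_lt_one hkr]; exact h2⟩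
  have hcore := core b c q p hb hc hq hp _ _ (mem h hh).1 (mem h hh).2 (mem a ha).1 (mem a ha).2
  have hq0 : (q : ℝ) ≠ 0 := by
    have : 0 < q := hq ▸ Nat.gcd_pos_of_pos_left c hb
    positivity
  have harg : ((c : ℝ) * a + (b : ℝ) * h) / (q * k) = (c * ((a : ℝ) / k) + b * ((h : ℝ) / k)) / q := by
    field_simp
  rw [harg, ← Finset.mul_sum, ← Complex.ofReal_sum]
  generalize (∑ m ∈ range c, BFun p (b * (((h : ℝ) / k + m) / c) + (a : ℝ) / k) *
        BFun 1 (((h : ℝ) / k + m) / c) : ℝ) = S1 at hcore ⊢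
  generalize (∑ m ∈ range b, BFun p (c * (((a : ℝ) / k + m) / b) + (h : ℝ) / k) *
        BFun 1 (((a : ℝ) / k + m) / b) : ℝ) = S2 at hcore ⊢
  generalize (∑ j ∈ range (p + 2), ((p+1).choose j : ℝ) * b ^ j * c ^ (p + 1 - j) *
    BFun j ((h : ℝ) / k) * BFun (p + 1 - j) ((a : ℝ) / k) : ℝ) = S3 at hcore ⊢
  have hcoreC := congrArg (fun t : ℝ => (t : ℂ)) hcore
  push_cast at hcoreC
  linear_combination ((k : ℂ) ^ (p - 1) *
    (χ₁ (h : ZMod k) * (starRingEnd ℂ) (χ₂ (a : ZMod k)))) * hcoreC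
end

section
/- Let b, c be positive integers, let p ≥ 1 be an integer, and let χ₁, χ₂ be non-principal primitive Dirichlet characters of the same modulus k. If (−1)^{p+1}·χ₁(−1)·χ₂(−1) = −1, then s_p(b,c:χ₁,χ₂) = 0. -/
open Finset

theorem BFun_one_eq (x : ℝ) :
    BFun 1 x = if Int.fract x = 0 then 0 else Int.fract x - 1/2 := by
  have h : (∃ m : ℤ, x = (m : ℝ)) ↔ Int.fract x = 0 := by
    rw [Int.fract_eq_zero_iff]
    simp [eq_comm]
  by_cases hx : Int.fract x = 0
  · simp [BFun, h, hx]
  · simp only [BFun, h, hx, if_true, if_false]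
    rfl

theorem BFun_congr (p : ℕ) {x y : ℝ} (h : Int.fract x = Int.fract y) : BFun p x = BFun p y := by
  by_cases hp : p = 1
  · subst hp
    rw [BFun_one_eq, BFun_one_eq, h]
  · simp [BFun, hp, h]

theorem BPoly_one_sub (p : ℕ) (x : ℝ) : BPoly p (1 - x) = (-1) ^ p * BPoly p x := by
  have h := congr_arg (fun q => Polynomial.aeval x q) (Polynomial.bernoulli_comp_one_sub_X p)
  simpa [BPoly, Polynomial.eval_map_algebraMap, Polynomial.aeval_comp] using h

theorem BFun_neg (p : ℕ) (x : ℝ) : BFun p (-x) = (-1) ^ p * BFun p x := by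
  by_cases hp : p = 1
  · subst hp
    rw [BFun_one_eq, BFun_one_eq]
    by_cases hx : Int.fract x = 0
    · rw [if_pos hx, if_pos (Int.fract_neg_eq_zero.2 hx)]
      simp
    · rw [if_neg hx, if_neg (fun h => hx (Int.fract_neg_eq_zero.1 h)), Int.fract_neg hx]
      ring
  · simp only [BFun, hp, if_false]
    by_cases hx : Int.fract x = 0
    · rw [hx, Int.fract_neg_eq_zero.2 hx]
      rcases Nat.even_or_odd p with he | ho
      · simp [he.neg_one_pow]
      · have h1 : 1 < p := by
          rcases ho with ⟨m, rfl⟩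
          omega
        have : BPoly p 0 = 0 := by
          have := Polynomial.bernoulli_eval_zero p
          rw [bernoulli_eq_zero_of_odd ho h1] at this
          rw [BPoly, ← Polynomial.coeff_zero_eq_eval_zero, Polynomial.coeff_map,
            Polynomial.coeff_zero_eq_eval_zero, this, map_zero]
        simp [this]
    · rw [Int.fract_neg hx, BPoly_one_sub]

theorem sum_reflect_Icc (N : ℕ) (f : ℕ → ℂ) :
    ∑ n ∈ Finset.Icc 1 (N - 1), f n = ∑ n ∈ Finset.Icc 1 (N - 1), f (N - n) := by
  refine Finset.sum_nbij' (fun n => N - n) (fun n => N - n) ?_ ?_ ?_ ?_ ?_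
  · intro a ha
    simp only [Finset.mem_Icc] at ha ⊢
    omega
  · intro a ha
    simp only [Finset.mem_Icc] at ha ⊢
    omega
  · intro a ha
    simp only [Finset.mem_Icc] at ha
    omega
  · intro a ha
    simp only [Finset.mem_Icc] at ha
    omega
  · intro a ha
    simp only [Finset.mem_Icc] at ha
    congr 1
    omega

theorem char_neg_one_conj {k : ℕ} (χ : DirichletCharacter ℂ k) :
    (starRingEnd ℂ) (χ (-1)) = χ (-1) := by
  have h : χ (-1) * χ (-1) = 1 := by rw [← map_mul]; simp
  rcases mul_self_eq_one_iff.1 h with h | h <;> simp [h]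

theorem char_neg' {k : ℕ} (χ : DirichletCharacter ℂ k) (a : ZMod k) :
    χ (-a) = χ (-1) * χ a := by
  rw [← map_mul, neg_one_mul]

theorem BFunChar_reflect {k : ℕ} [NeZero k] (χ : DirichletCharacter ℂ k) (p b : ℕ) (y : ℝ) :
    BFunChar χ p (b * k - y) = χ (-1) * (-1) ^ p * BFunChar χ p y := by
  have hk : (k : ℝ) ≠ 0 := by exact_mod_cast NeZero.ne k
  unfold BFunChar
  rw [sum_reflect_Icc, mul_left_comm, Finset.mul_sum (a := χ (-1) * (-1) ^ p)]
  congr 1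
  refine Finset.sum_congr rfl fun n hn => ?_
  have hn' : n ≤ k := by
    simp only [Finset.mem_Icc] at hn
    omega
  have h1 : ((k - n : ℕ) : ZMod k) = -(n : ZMod k) := by
    rw [Nat.cast_sub hn']; simp
  have h2 : BFun p ((((k - n : ℕ) : ℝ) + (b * k - y)) / k) = (-1) ^ p * BFun p ((n + y) / k) := by
    rw [← BFun_neg]
    apply BFun_congr
    have : (((k - n : ℕ) : ℝ) + (b * k - y)) / k = -((n + y) / k) + ((b + 1 : ℕ) : ℝ) := by
      rw [Nat.cast_sub hn']
      push_cast
      field_simp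
      ring
    rw [this, Int.fract_add_natCast]
  rw [h1, h2, char_neg', map_mul, char_neg_one_conj]
  push_cast
  ring

/-- The character Dedekind sum `s_p(b,c:χ₁,χ₂)` vanishes when
`(−1)^{p+1} χ₁(−1) χ₂(−1) = −1`. -/
theorem sChar_eq_zero (b c : ℕ) (hb : 0 < b) (hc : 0 < c) (p : ℕ) (hp : 1 ≤ p)
    (k : ℕ) [NeZero k] (χ₁ χ₂ : DirichletCharacter ℂ k)
    (h₁ : χ₁ ≠ 1) (h₂ : χ₂ ≠ 1) (hprim₁ : χ₁.IsPrimitive) (hprim₂ : χ₂.IsPrimitive)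
    (hpar : (-1 : ℂ) ^ (p + 1) * χ₁ (-1) * χ₂ (-1) = -1) :
    sChar p b c χ₁ χ₂ = 0 := by
  have hk : (k : ℝ) ≠ 0 := by exact_mod_cast NeZero.ne k
  have hc' : (c : ℝ) ≠ 0 := by exact_mod_cast hc.ne'
  have hN : 0 < c * k := Nat.mul_pos hc (Nat.pos_of_ne_zero (NeZero.ne k))
  have h0 : sChar p b c χ₁ χ₂ = ∑ n ∈ Finset.Icc 1 (c * k - 1),
      χ₁ (n : ZMod k) * BFunChar χ₂ p (((b : ℝ) * n) / c) *
        ((BFun 1 ((n : ℝ) / (c * k))) : ℂ) := by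
    unfold sChar
    symm
    apply Finset.sum_subset
    · intro n hn
      simp only [Finset.mem_Icc, Finset.mem_range] at hn ⊢
      omega
    · intro n hn hn'
      simp only [Finset.mem_Icc, Finset.mem_range] at hn hn'
      obtain rfl : n = 0 := by omega
      simp [BFun_one_eq]
  have h3 : sChar p b c χ₁ χ₂ = - sChar p b c χ₁ χ₂ := by
    conv_lhs => rw [h0, sum_reflect_Icc]
    rw [h0, ← neg_one_mul, ← hpar, Finset.mul_sum]
    refine Finset.sum_congr rfl fun n hn => ?_
    have hn' : n ≤ c * k := by
      simp only [Finset.mem_Icc] at hn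
      omega
    have e1 : ((c * k - n : ℕ) : ZMod k) = -(n : ZMod k) := by
      rw [Nat.cast_sub hn']; simp
    have e2 : (b : ℝ) * ((c * k - n : ℕ) : ℝ) / c = b * k - b * n / c := by
      rw [Nat.cast_sub hn']
      push_cast
      field_simp
    have e3 : BFun 1 (((c * k - n : ℕ) : ℝ) / (c * k)) = - BFun 1 ((n : ℝ) / (c * k)) := by
      have : - BFun 1 ((n : ℝ) / (c * k)) = BFun 1 (-((n : ℝ) / (c * k))) := by
        rw [BFun_neg]; ring
      rw [this]
      apply BFun_congr
      have : ((c * k - n : ℕ) : ℝ) / (c * k) = -((n : ℝ) / (c * k)) + ((1 : ℕ) : ℝ) := by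
        rw [Nat.cast_sub hn']
        push_cast
        field_simp
        ring
      rw [this, Int.fract_add_natCast]
    rw [e1, e2, e3, char_neg', BFunChar_reflect]
    push_cast
    ring
  exact self_eq_neg.1 h3
end

section
/- Let b, c be coprime positive integers, let p ≥ 1 be an integer, and let χ₁, χ₂ be non-principal primitive Dirichlet characters of the same modulus k satisfying (−1)^{p+1}·χ₁(−1)·χ₂(−1) = 1. Then Σ_{n=1}^{ck−1} χ₁(n)·B̄_{p+1,χ₂}(bn/c) = (k/c)^p · Σ_{h=1}^{k−1} Σ_{j=1}^{k−1} χ₁(h)·χ̄₂(j)·B̄_{p+1}( (c·j + b·h)/k ). -/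
open Finset

lemma BFun_hasSum {q : ℕ} (hq : 2 ≤ q) (x : ℝ) :
    HasSum (fun n : ℤ => 1 / (n : ℂ) ^ q * Complex.exp (2 * Real.pi * Complex.I * n * x))
      (-(2 * Real.pi * Complex.I) ^ q / (q.factorial : ℂ) * (BFun q x : ℂ)) := by
  have h := hasSum_one_div_pow_mul_fourier_mul_bernoulliFun hq (x := Int.fract x)
    ⟨Int.fract_nonneg x, (Int.fract_lt_one x).le⟩
  have e : BFun q x = bernoulliFun q (Int.fract x) := by
    unfold BFun
    rw [if_neg (by omega)]
    rfl
  rw [e]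
  refine h.congr_fun ?_ 
  intro n
  rw [fourier_coe_apply]
  congr 1
  rw [Complex.exp_eq_exp_iff_exists_int]
  refine ⟨n * ⌊x⌋, ?_⟩
  have : (Int.fract x : ℝ) = x - ⌊x⌋ := rfl
  rw [this]
  push_cast
  ring

lemma geom_char (b c : ℕ) (hc : 0 < c) (hbc : Nat.Coprime b c) (n : ℤ) :
    ∑ m ∈ Finset.range c, Complex.exp (2 * Real.pi * Complex.I * n * (b / c)) ^ m
      = if (c : ℤ) ∣ n then (c : ℂ) else 0 := by
  have hc0 : (c : ℂ) ≠ 0 := by exact_mod_cast hc.ne'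
  have hpi := Complex.two_pi_I_ne_zero
  split_ifs with h
  · obtain ⟨t, rfl⟩ := h
    have : Complex.exp (2 * Real.pi * Complex.I * ((c * t : ℤ) : ℂ) * (b / c)) = 1 := by
      rw [Complex.exp_eq_one_iff]
      refine ⟨t * b, ?_⟩
      push_cast
      field_simp
    rw [this]; simp
  · have hne : Complex.exp (2 * Real.pi * Complex.I * n * (b / c)) ≠ 1 := by
      intro h1
      rw [Complex.exp_eq_one_iff] at h1
      obtain ⟨t, ht⟩ := h1
      have h2 : (n : ℂ) * b = t * c := by
        apply mul_left_cancel₀ hpi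
        field_simp at ht
        linear_combination (2 * Real.pi * Complex.I) * ht
      have h3 : n * b = t * c := by exact_mod_cast h2
      apply h
      have h4 : (c : ℤ) ∣ n * b := ⟨t, by rw [h3]; ring⟩
      exact (Nat.Coprime.isCoprime hbc.symm).dvd_of_dvd_mul_right h4
    rw [geom_sum_eq hne, ← Complex.exp_nat_mul]
    have : Complex.exp (c * (2 * Real.pi * Complex.I * n * (b / c))) = 1 := by
      rw [Complex.exp_eq_one_iff]
      refine ⟨n * b, ?_⟩
      push_cast
      field_simp
    rw [this]; simp

lemma BFun_mult (b c : ℕ) (hc : 0 < c) (hbc : Nat.Coprime b c) (p : ℕ) (hp : 1 ≤ p) (x : ℝ) :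
    (c : ℂ) ^ p * ∑ m ∈ Finset.range c, (BFun (p + 1) (x + b / c * m) : ℂ)
      = (BFun (p + 1) (c * x) : ℂ) := by
  have hc0 : (c : ℂ) ≠ 0 := by exact_mod_cast hc.ne'
  have hpi := Complex.two_pi_I_ne_zero
  have hq : 2 ≤ p + 1 := by omega
  have H1 := hasSum_sum (s := Finset.range c)
    (fun (m : ℕ) _ => BFun_hasSum hq (x + b / c * m))
  have H2 := BFun_hasSum hq (c * x)
  have e : ∀ n : ℤ, ∑ m ∈ Finset.range c, 1 / (n : ℂ) ^ (p + 1) *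
      Complex.exp (2 * Real.pi * Complex.I * n * ((x + b / c * m : ℝ) : ℂ)) =
      1 / (n : ℂ) ^ (p + 1) * Complex.exp (2 * Real.pi * Complex.I * n * x) *
        (if (c : ℤ) ∣ n then (c : ℂ) else 0) := by
    intro n
    rw [← geom_char b c hc hbc, Finset.mul_sum]
    refine Finset.sum_congr rfl fun m _ => ?_
    rw [mul_assoc (1 / (n : ℂ) ^ (p + 1)), ← Complex.exp_nat_mul, ← Complex.exp_add]
    congr 2
    push_cast
    ring
  simp_rw [e] at H1
  have hinj : Function.Injective (fun t : ℤ => (c : ℤ) * t) := fun a b h => by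
    have : (c : ℤ) ≠ 0 := by exact_mod_cast hc.ne'
    exact mul_left_cancel₀ this h
  rw [← hinj.hasSum_iff] at H1
  swap
  · intro n hn
    rw [if_neg, mul_zero]
    rintro ⟨t, rfl⟩
    exact hn ⟨t, rfl⟩
  have H3 := (H1.mul_left ((c : ℂ) ^ p))
  have H4 := H3.unique (H2.congr_fun ?_)
  · rw [← Finset.mul_sum] at H4
    have hA : -(2 * Real.pi * Complex.I) ^ (p + 1) / ((p + 1).factorial : ℂ) ≠ 0 :=
      div_ne_zero (neg_ne_zero.2 (pow_ne_zero _ hpi)) (by exact_mod_cast Nat.factorial_ne_zero _)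
    apply mul_left_cancel₀ hA
    rw [← H4]; ring
  · intro t
    simp only [Function.comp, dvd_mul_right, if_true]
    have : Complex.exp (2 * Real.pi * Complex.I * ((c * t : ℤ) : ℂ) * x)
      = Complex.exp (2 * Real.pi * Complex.I * t * ((c * x : ℝ) : ℂ)) := by
      congr 1; push_cast; ring
    rw [this]
    push_cast
    rw [mul_pow, pow_succ (c : ℂ)]
    by_cases ht : (t : ℂ) = 0
    · simp [ht]
    · field_simp

lemma sum_range_mul_split (f : ℕ → ℂ) (c k : ℕ) :
    ∑ n ∈ Finset.range (c * k), f n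
      = ∑ h ∈ Finset.range k, ∑ m ∈ Finset.range c, f (m * k + h) := by
  rw [Finset.sum_comm]
  induction c with
  | zero => simp
  | succ c ih => rw [Nat.succ_mul, Finset.sum_range_add, ih, Finset.sum_range_succ]

lemma sum_Icc_eq_range (f : ℕ → ℂ) (h0 : f 0 = 0) (N : ℕ) (hN : 0 < N) :
    ∑ n ∈ Finset.Icc 1 (N - 1), f n = ∑ n ∈ Finset.range N, f n := by
  obtain ⟨M, rfl⟩ : ∃ M, N = M + 1 := ⟨N - 1, by omega⟩
  apply Finset.sum_subset
  · intro n; simp only [Finset.mem_Icc, Finset.mem_range]; omega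
  · intro n h1 h2
    have : n = 0 := by simp at h1 h2; omega
    rw [this, h0]

/-- Evaluation of `Σ_{n=1}^{ck−1} χ₁(n) B̄_{p+1,χ₂}(bn/c)` as a double character sum. -/
theorem sum_char_BFunChar_eq_double_sum (b c : ℕ) (hb : 0 < b) (hc : 0 < c)
    (hbc : Nat.Coprime b c) (p : ℕ) (hp : 1 ≤ p)
    (k : ℕ) [NeZero k] (χ₁ χ₂ : DirichletCharacter ℂ k)
    (h₁ : χ₁ ≠ 1) (h₂ : χ₂ ≠ 1) (hprim₁ : χ₁.IsPrimitive) (hprim₂ : χ₂.IsPrimitive)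
    (hpar : (-1 : ℂ) ^ (p + 1) * χ₁ (-1) * χ₂ (-1) = 1) :
    ∑ n ∈ Finset.Icc 1 (c * k - 1), χ₁ (n : ZMod k) * BFunChar χ₂ (p + 1) (((b : ℝ) * n) / c) =
      ((k : ℂ) / c) ^ p * ∑ h ∈ Finset.Icc 1 (k - 1), ∑ j ∈ Finset.Icc 1 (k - 1),
        χ₁ (h : ZMod k) * (starRingEnd ℂ) (χ₂ (j : ZMod k)) *
          ((BFun (p + 1) (((c : ℝ) * j + (b : ℝ) * h) / k)) : ℂ) := by
  have hk : 0 < k := Nat.pos_of_ne_zero (NeZero.ne k)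
  have hk1 : k ≠ 1 := by
    rintro rfl
    exact h₁ (DirichletCharacter.level_one χ₁)
  have hc0 : (c : ℂ) ≠ 0 := by exact_mod_cast hc.ne'
  have hk0 : (k : ℝ) ≠ 0 := by exact_mod_cast hk.ne'
  have hcR : (c : ℝ) ≠ 0 := by exact_mod_cast hc.ne'
  have hz : χ₁ ((0 : ℕ) : ZMod k) = 0 := by
    have : Nontrivial (ZMod k) := ZMod.nontrivial_iff.2 hk1
    rw [Nat.cast_zero]
    exact χ₁.map_nonunit not_isUnit_zero
  rw [sum_Icc_eq_range _ (by rw [hz, zero_mul]) _ (Nat.mul_pos hc hk),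
    sum_Icc_eq_range _ (by simp only [hz, zero_mul, Finset.sum_const_zero]) _ hk,
    sum_range_mul_split, Finset.mul_sum]
  refine Finset.sum_congr rfl fun h _ => ?_
  have key : ∀ j : ℕ, (BFun (p + 1) (((c : ℝ) * j + (b : ℝ) * h) / k) : ℂ) =
      (c : ℂ) ^ p * ∑ m ∈ Finset.range c,
        (BFun (p + 1) (((j : ℝ) + ((b : ℝ) * ((m * k + h : ℕ) : ℝ)) / c) / k) : ℂ) := by
    intro j
    have e := BFun_mult b c hc hbc p hp (((j : ℝ) + b * h / c) / k)
    have e1 : (c : ℝ) * (((j : ℝ) + b * h / c) / k) = ((c : ℝ) * j + (b : ℝ) * h) / k := by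
      field_simp
    rw [e1] at e
    rw [← e]
    congr 1
    refine Finset.sum_congr rfl fun m _ => ?_
    congr 2
    push_cast
    field_simp
    ring
  simp_rw [key]
  have hm : ∀ m : ℕ, ((m * k + h : ℕ) : ZMod k) = (h : ZMod k) := by intro m; simp
  simp_rw [hm]
  unfold BFunChar
  have hz' : (k : ℂ) ^ (((p + 1 : ℕ) : ℤ) - 1) = (k : ℂ) ^ p := by
    have : ((p + 1 : ℕ) : ℤ) - 1 = (p : ℤ) := by push_cast; ring
    rw [this, zpow_natCast]
  rw [hz']
  simp_rw [Finset.mul_sum]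
  rw [Finset.sum_comm]
  refine Finset.sum_congr rfl fun j _ => Finset.sum_congr rfl fun m _ => ?_
  rw [div_pow]
  field_simp
end

section
/- Let χ₁ and χ₂ be distinct non-principal primitive Dirichlet characters of the same modulus k, let b, c be coprime positive integers, and let p ≥ 1 be an integer. Then Σ_{n=1}^{ck−1} χ₁(n)·B̄_{p,χ₂}(bn/c) = −ε · (p!/(2πi)^p) · (k/c)^{p−1} · G(b,χ₁) · G(c,χ̄₂) · L(p, χ̄₁χ₂), where ε = 1 + (−1)^p·χ₁(−1)·χ₂(−1), G(b,χ) = Σ_{n=0}^{k−1} χ(n)·e^{2πi·b·n/k} is the Gauss sum, and L(p, χ̄₁χ₂) is the Dirichlet L-function of the (non-principal) character χ̄₁χ₂ modulo k evaluated at p. -/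
open Finset

/-- The Gauss sum `G(b,χ) = Σ_{n=0}^{k−1} χ(n) e^{2πibn/k}`. -/
noncomputable def GaussSumE {k : ℕ} (b : ℕ) (χ : DirichletCharacter ℂ k) : ℂ :=
  ∑ n ∈ Finset.range k, χ (n : ZMod k) * Complex.exp (2 * Real.pi * Complex.I * b * n / k)

open HurwitzZeta Complex Filter Topology in
lemma aux_diff_hasSum (w L : ℂ) (a : ℕ → ℂ) (h0 : a 0 = 0)
    (h : HasSum (fun n => w ^ n * a n) L) :
    HasSum (fun n => w ^ (n + 1) * (a (n + 1) - a n)) ((1 - w) * L) := by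
  have h1 : HasSum (fun n => w ^ (n + 1) * a (n + 1)) L := by
    have := (hasSum_nat_add_iff' 1).2 h
    simpa [h0] using this
  have h2 := h1.sub (h.mul_left w)
  rw [show (1 - w) * L = L - w * L by ring]
  refine h2.congr_fun fun n => ?_
  ring

lemma aux_bound (s : ℝ) (h1 : 1 ≤ s) (h2 : s ≤ 2) (n : ℕ) :
    |1 / ((n + 1 : ℕ) : ℝ) ^ s - 1 / (n : ℝ) ^ s| ≤ 3 / ((n : ℝ) + 1) ^ 2 := by
  rcases Nat.eq_zero_or_pos n with rfl | hn
  · simp [Real.zero_rpow (by linarith : s ≠ 0)]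
  have hn' : (1 : ℝ) ≤ n := by exact_mod_cast hn
  have hpos : (0 : ℝ) < n := by linarith
  have e1 : (n : ℝ) ≤ (n : ℝ) ^ s := by
    simpa using Real.rpow_le_rpow_of_exponent_le hn' h1
  have e2 : ((n : ℝ) / (n + 1)) ^ (2 : ℝ) ≤ ((n : ℝ) / (n + 1)) ^ s := by
    apply Real.rpow_le_rpow_of_exponent_ge (by positivity) _ h2
    rw [div_le_one (by positivity)]; linarith
  have e3 : (n : ℝ) ^ s ≤ ((n : ℝ) + 1) ^ s :=
    Real.rpow_le_rpow hpos.le (by linarith) (by linarith)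
  have p1 : 0 < (n : ℝ) ^ s := by positivity
  have p2 : 0 < ((n : ℝ) + 1) ^ s := by positivity
  push_cast
  rw [abs_sub_comm, abs_of_nonneg (sub_nonneg.2 (one_div_le_one_div_of_le p1 e3))]
  have e4 : 1 / (n : ℝ) ^ s - 1 / ((n : ℝ) + 1) ^ s
      = 1 / (n : ℝ) ^ s * (1 - (n : ℝ) ^ s / ((n : ℝ) + 1) ^ s) := by
    field_simp
  have e5 : (0:ℝ) ≤ 1 - ((n : ℝ) / (n + 1)) ^ (2 : ℝ) := by
    rw [Real.rpow_two, div_pow, sub_nonneg, div_le_one (by positivity)]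
    nlinarith
  rw [e4]
  calc _ ≤ 1 / (n : ℝ) * (1 - ((n : ℝ) / (n + 1)) ^ (2 : ℝ)) := by
        have e6 := one_div_le_one_div_of_le hpos e1
        rw [Real.div_rpow hpos.le (by positivity)] at e5
        rw [Real.div_rpow hpos.le (by positivity)]
        rw [Real.div_rpow hpos.le (by positivity), Real.div_rpow hpos.le (by positivity)] at e2
        refine mul_le_mul e6 (by linarith) ?_ (by positivity)
        rw [sub_nonneg, div_le_one p2]; exact e3
    _ ≤ _ := by
        rw [Real.rpow_two]
        rw [show 1 / (n : ℝ) * (1 - ((n : ℝ) / (n + 1)) ^ 2)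
          = (2 * n + 1) / (n * ((n : ℝ) + 1) ^ 2) by field_simp; ring]
        rw [div_le_div_iff₀ (by positivity) (by positivity)]
        have : 0 < ((n : ℝ) + 1) ^ 2 := by positivity
        nlinarith

lemma aux_summable : Summable (fun n : ℕ => 3 / ((n : ℝ) + 1) ^ 2) := by
  have := (summable_nat_add_iff 1).2 (Real.summable_one_div_nat_pow.2 (one_lt_two))
  simpa [div_eq_mul_inv] using this.mul_left 3

open HurwitzZeta Complex Filter Topology in
lemma aux_expZeta_one (x : ℝ) (hx : cexp (2 * Real.pi * I * x) ≠ 1)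
    (hx' : (x : UnitAddCircle) ≠ 0) :
    expZeta x 1 = -Complex.log (1 - cexp (2 * Real.pi * I * x)) := by
  set z := cexp (2 * Real.pi * I * x) with hz
  have hz1 : ‖z‖ = 1 := by
    rw [hz, show (2 * Real.pi * I * x : ℂ) = ((2 * Real.pi * x : ℝ) : ℂ) * I by push_cast; ring]
    exact Complex.norm_exp_ofReal_mul_I _
  set T : ℂ := ∑' n : ℕ, z ^ (n + 1) * (1 / ((n + 1 : ℕ) : ℂ) - 1 / (n : ℂ)) with hT
  have hlow : ∀ (s : ℝ) (n : ℕ), 1 / ((n + 1 : ℕ) : ℂ) ^ (s : ℂ) - 1 / (n : ℂ) ^ (s : ℂ)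
      = ((1 / ((n + 1 : ℕ) : ℝ) ^ s - 1 / (n : ℝ) ^ s : ℝ) : ℂ) := by
    intro s n
    push_cast [Complex.ofReal_cpow (by positivity : (0:ℝ) ≤ n),
      Complex.ofReal_cpow (by positivity : (0:ℝ) ≤ n + 1)]
    rfl
  -- first limit
  have L1 : (1 - z) * expZeta x 1 = T := by
    have t1 : Tendsto (fun s : ℝ => (1 - z) * expZeta x (s : ℂ)) (𝓝[>] 1)
        (𝓝 ((1 - z) * expZeta x 1)) := by
      have := (differentiable_expZeta_of_ne_zero hx').continuous.tendsto ((1 : ℝ) : ℂ)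
      have h2 := (this.comp (Complex.continuous_ofReal.tendsto 1)).const_mul (1 - z)
      simpa using h2.mono_left nhdsWithin_le_nhds
    have t2 : Tendsto (fun s : ℝ => ∑' n : ℕ, z ^ (n + 1) *
        (1 / ((n + 1 : ℕ) : ℂ) ^ (s : ℂ) - 1 / (n : ℂ) ^ (s : ℂ))) (𝓝[>] 1) (𝓝 T) := by
      refine tendsto_tsum_of_dominated_convergence aux_summable ?_ ?_
      · intro n
        refine Tendsto.const_mul _ ?_
        simp_rw [hlow]
        have : (1 / ((n + 1 : ℕ) : ℂ) - 1 / (n : ℂ))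
          = ((1 / ((n + 1 : ℕ) : ℝ) ^ (1:ℝ) - 1 / (n : ℝ) ^ (1:ℝ) : ℝ) : ℂ) := by
          push_cast; simp
        rw [this]
        refine (Complex.continuous_ofReal.tendsto _).comp ?_
        refine Tendsto.mono_left ?_ nhdsWithin_le_nhds
        refine Tendsto.sub ?_ ?_
        · refine Tendsto.div tendsto_const_nhds ?_ (by positivity)
          exact (Real.continuousAt_const_rpow (by positivity)).tendsto
        · rcases Nat.eq_zero_or_pos n with rfl | hn
          · refine tendsto_const_nhds.congr' ?_
            filter_upwards [eventually_gt_nhds (zero_lt_one)] with s hs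
            simp [Real.zero_rpow hs.ne']
          · refine Tendsto.div tendsto_const_nhds ?_ (by positivity)
            exact (Real.continuousAt_const_rpow (by positivity)).tendsto
      · have : ∀ᶠ s : ℝ in 𝓝[>] 1, s ≤ 2 :=
          nhdsWithin_le_nhds (eventually_le_nhds (by norm_num))
        filter_upwards [this, self_mem_nhdsWithin] with s hs2 hs1 n
        rw [hlow, norm_mul, norm_pow, hz1, one_pow, one_mul, Complex.norm_real, Real.norm_eq_abs]
        exact aux_bound s (le_of_lt hs1) hs2 n
    refine tendsto_nhds_unique t1 (t2.congr' ?_)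
    filter_upwards [self_mem_nhdsWithin] with s hs
    have hs : 1 < s := hs
    have h := hasSum_expZeta_of_one_lt_re x (s := (s : ℂ)) (by simpa using hs)
    refine (aux_diff_hasSum z _ (fun n => 1 / (n : ℂ) ^ (s : ℂ)) ?_ ?_).tsum_eq
    · simp [Complex.zero_cpow (by exact_mod_cast (by linarith : s ≠ 0) : (s : ℂ) ≠ 0)]
    · convert h using 2 with n
      rw [hz, ← Complex.exp_nat_mul, mul_one_div]
      congr 2; ring
  have hre : z.re < 1 := by
    have h1 : z.re ≤ 1 := hz1 ▸ Complex.re_le_norm z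
    refine lt_of_le_of_ne h1 fun h => hx ?_
    have : z.re ^ 2 + z.im ^ 2 = 1 := by
      have := Complex.sq_norm z
      rw [hz1, Complex.normSq_apply] at this; nlinarith
    rw [h] at this
    apply Complex.ext
    · simpa using h
    · simp; nlinarith
  have L2 : (1 - z) * (-Complex.log (1 - z)) = T := by
    have t1 : Tendsto (fun r : ℝ => (1 - r * z) * (-Complex.log (1 - r * z))) (𝓝[<] 1)
        (𝓝 ((1 - z) * (-Complex.log (1 - z)))) := by
      have : ContinuousAt (fun r : ℝ => (1 - r * z) * (-Complex.log (1 - r * z))) 1 := by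
        have c1 : ContinuousAt (fun r : ℝ => (1 - r * z : ℂ)) 1 := by fun_prop
        refine c1.mul (ContinuousAt.neg (ContinuousAt.clog c1 ?_))
        left; simp; linarith
      have := this.tendsto
      simp only [ofReal_one, one_mul] at this
      exact this.mono_left nhdsWithin_le_nhds
    have t2 : Tendsto (fun r : ℝ => ∑' n : ℕ, (r * z) ^ (n + 1) *
        (1 / ((n + 1 : ℕ) : ℂ) - 1 / (n : ℂ))) (𝓝[<] 1) (𝓝 T) := by
      refine tendsto_tsum_of_dominated_convergence aux_summable ?_ ?_
      · intro n
        refine Tendsto.mul_const _ ?_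
        have : ContinuousAt (fun r : ℝ => (r * z : ℂ) ^ (n + 1)) 1 := by fun_prop
        have := this.tendsto
        simp only [ofReal_one, one_mul] at this
        exact this.mono_left nhdsWithin_le_nhds
      · have : ∀ᶠ s : ℝ in 𝓝[<] 1, 0 ≤ s :=
          nhdsWithin_le_nhds (eventually_ge_nhds (by norm_num))
        filter_upwards [this, self_mem_nhdsWithin] with r hr0 hr1 n
        have hr1 : r < 1 := hr1
        have hh := hlow 1 n
        simp only [ofReal_one, cpow_one] at hh
        rw [hh, norm_mul, norm_pow, norm_mul, hz1, Complex.norm_real, Complex.norm_real,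
          Real.norm_eq_abs, Real.norm_eq_abs, mul_one, abs_of_nonneg hr0]
        have b := aux_bound 1 le_rfl (by norm_num) n
        have := pow_le_one₀ (n := n + 1) hr0 hr1.le
        exact (mul_le_of_le_one_left (abs_nonneg _) this).trans b
    refine tendsto_nhds_unique t1 (t2.congr' ?_)
    have : ∀ᶠ s : ℝ in 𝓝[<] 1, 0 ≤ s :=
      nhdsWithin_le_nhds (eventually_ge_nhds (by norm_num))
    filter_upwards [this, self_mem_nhdsWithin] with r hr0 hr1
    have hr1 : r < 1 := hr1
    have h := Complex.hasSum_taylorSeries_neg_log (z := r * z) (by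
      rw [norm_mul, hz1, Complex.norm_real, Real.norm_eq_abs, mul_one, abs_of_nonneg hr0]
      exact hr1)
    refine (aux_diff_hasSum (r * z) _ (fun n => 1 / (n : ℂ)) (by simp) ?_).tsum_eq
    convert h using 2 with n
    rw [mul_one_div]
  have hne : (1 - z) ≠ 0 := sub_ne_zero.2 (Ne.symm hx)
  exact mul_left_cancel₀ hne (L1.trans L2.symm)

open HurwitzZeta Complex Filter Topology in
lemma aux_sinZeta_one (x : ℝ) (h0 : 0 < x) (h1 : x < 1) :
    sinZeta x 1 = Real.pi * (1 / 2 - x) := by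
  have hπ := Real.pi_pos
  have hs : 0 < Real.sin (Real.pi * x) := Real.sin_pos_of_pos_of_lt_pi (by positivity) (by nlinarith)
  -- key identities
  have key : ∀ y : ℝ, 1 - cexp (2 * Real.pi * I * y)
      = ((2 * Real.sin (Real.pi * y) : ℝ) : ℂ) * cexp (((Real.pi * y - Real.pi / 2 : ℝ) : ℂ) * I) := by
    intro y
    have : (((Real.pi * y - Real.pi / 2 : ℝ) : ℂ) * I)
      = (Real.pi * y : ℂ) * I + (-(Real.pi / 2 * I)) := by push_cast; ring
    rw [this, Complex.exp_add, Complex.exp_neg, Complex.exp_pi_div_two_mul_I,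
      show (2 * Real.pi * I * y : ℂ) = (Real.pi * y : ℂ) * I + (Real.pi * y : ℂ) * I by ring,
      Complex.exp_add]
    push_cast
    rw [Complex.sin, neg_mul, Complex.exp_neg]
    have := Complex.exp_ne_zero ((Real.pi * y : ℂ) * I)
    field_simp
  have hlog : Complex.log (1 - cexp (2 * Real.pi * I * x))
      = Real.log (2 * Real.sin (Real.pi * x)) + ((Real.pi * x - Real.pi / 2 : ℝ) : ℂ) * I := by
    rw [key x, Complex.log_ofReal_mul (by positivity) (Complex.exp_ne_zero _), Complex.log_exp]
    · simp; nlinarith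
    · simp; nlinarith
  have hlog' : Complex.log (1 - cexp (2 * Real.pi * I * (-x : ℝ)))
      = Real.log (2 * Real.sin (Real.pi * x)) - ((Real.pi * x - Real.pi / 2 : ℝ) : ℂ) * I := by
    have e : 1 - cexp (2 * Real.pi * I * (-x : ℝ)) = ((2 * Real.sin (Real.pi * x) : ℝ) : ℂ) *
        cexp (((-(Real.pi * x - Real.pi / 2) : ℝ) : ℂ) * I) := by
      rw [key (-x), show Real.pi * -x - Real.pi / 2 = -(Real.pi * x - Real.pi / 2) - Real.pi by ring,
        Complex.ofReal_sub, sub_mul, Complex.exp_sub, Complex.exp_pi_mul_I, mul_neg, Real.sin_neg]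
      push_cast; ring
    rw [e, Complex.log_ofReal_mul (by positivity) (Complex.exp_ne_zero _), Complex.log_exp]
    · push_cast; ring
    · simp; nlinarith
    · simp; nlinarith
  have n1 : cexp (2 * Real.pi * I * x) ≠ 1 := by
    intro h
    have := key x
    rw [h, sub_self] at this
    have := (mul_eq_zero.1 this.symm).resolve_right (Complex.exp_ne_zero _)
    rw [Complex.ofReal_eq_zero] at this; linarith
  have n2 : cexp (2 * Real.pi * I * (-x : ℝ)) ≠ 1 := by
    intro h
    apply n1
    have e : (2 * Real.pi * I * x : ℂ) = -(2 * Real.pi * I * (-x : ℝ)) := by push_cast; ring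
    rw [e, Complex.exp_neg, h, inv_one]
  have m1 : (x : UnitAddCircle) ≠ 0 := by
    intro h
    obtain ⟨n, hn⟩ := (AddCircle.coe_eq_zero_iff (1 : ℝ)).1 h
    simp at hn
    rw [← hn] at h0 h1
    have a : (0:ℤ) < n := by exact_mod_cast h0
    have b : n < (1:ℤ) := by exact_mod_cast h1
    omega
  have m2 : ((-x : ℝ) : UnitAddCircle) ≠ 0 := by
    rw [AddCircle.coe_neg]; simpa using m1
  rw [sinZeta_eq, ← AddCircle.coe_neg, aux_expZeta_one x n1 m1, aux_expZeta_one (-x) n2 m2, hlog, hlog']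
  push_cast
  field_simp
  ring

open HurwitzZeta Complex in
lemma aux_BFun (p : ℕ) (hp : 1 ≤ p) (x : ℝ) :
    (BFun p x : ℂ) = -((p.factorial : ℂ) / (2 * Real.pi * I) ^ p) *
      (expZeta x p + (-1) ^ p * expZeta (-(x : UnitAddCircle)) p) := by
  have hπ : (Real.pi : ℂ) ≠ 0 := by exact_mod_cast Real.pi_ne_zero
  have hf : (x : UnitAddCircle) = ((Int.fract x : ℝ) : UnitAddCircle) := by
    rw [← sub_eq_zero, ← AddCircle.coe_sub]
    exact (AddCircle.coe_eq_zero_iff (1 : ℝ)).2 ⟨⌊x⌋, by simp⟩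
  have hmem : Int.fract x ∈ Set.Icc (0 : ℝ) 1 := ⟨Int.fract_nonneg x, (Int.fract_lt_one x).le⟩
  have hB : ∀ n : ℕ, ((BPoly n (Int.fract x) : ℝ) : ℂ) =
      ((Polynomial.bernoulli n).map (algebraMap ℚ ℂ)).eval ((Int.fract x : ℝ) : ℂ) := by
    intro n
    unfold BPoly
    rw [Polynomial.eval_map_algebraMap, Polynomial.eval_map_algebraMap]
    exact (Polynomial.aeval_algebraMap_apply ℂ (Int.fract x) (Polynomial.bernoulli n)).symm
  rcases Nat.even_or_odd' p with ⟨q, rfl | rfl⟩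
  · have hq : q ≠ 0 := by omega
    have e1 : (-1 : ℂ) ^ (2 * q) = 1 := by simp [pow_mul]
    have e2 : expZeta x (2 * q : ℕ) + (-1 : ℂ) ^ (2 * q) * expZeta (-(x : UnitAddCircle)) (2 * q : ℕ)
        = 2 * cosZeta x (2 * q : ℕ) := by
      rw [e1, cosZeta_eq]; ring
    have h1 : 2 * q ≠ 1 := by omega
    rw [e2, BFun, if_neg h1, hB, hf]
    have := cosZeta_two_mul_nat hq hmem
    push_cast
    rw [this, mul_pow (2 * (Real.pi : ℂ)) I, pow_mul I 2 q, I_sq]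
    have f0 : ((2 * q).factorial : ℂ) ≠ 0 := by exact_mod_cast Nat.factorial_ne_zero _
    have e3 : (-1 : ℂ) ^ q * (-1) ^ q = 1 := by rw [← mul_pow]; simp
    have e4 : (-1 : ℂ) ^ q ≠ 0 := by simp
    field_simp
    ring
  · have e1 : (-1 : ℂ) ^ (2 * q + 1) = -1 := by simp [pow_succ, pow_mul]
    have e2 : expZeta x (2 * q + 1 : ℕ) + (-1 : ℂ) ^ (2 * q + 1) * expZeta (-(x : UnitAddCircle)) (2 * q + 1 : ℕ)
        = 2 * I * sinZeta x (2 * q + 1 : ℕ) := by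
      rw [e1, sinZeta_eq]; field_simp; ring
    rw [e2]
    rcases Nat.eq_zero_or_pos q with rfl | hq
    · simp only [BFun, mul_zero, zero_add, if_true]
      split_ifs with h
      · obtain ⟨m, rfl⟩ := h
        have : ((m : ℝ) : UnitAddCircle) = 0 := (AddCircle.coe_eq_zero_iff (1 : ℝ)).2 ⟨m, by simp⟩
        have h2 : sinZeta (0 : UnitAddCircle) ((1 : ℕ) : ℂ) = 0 := by
          have := sinZeta_neg 0 ((1 : ℕ) : ℂ)
          rw [neg_zero] at this
          exact self_eq_neg.1 this
        rw [this, h2]; simp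
      · have hpos : 0 < Int.fract x := by
          refine lt_of_le_of_ne (Int.fract_nonneg x) fun h' => h ⟨⌊x⌋, ?_⟩
          have := Int.floor_add_fract x
          linarith
        rw [hf, Nat.cast_one, aux_sinZeta_one _ hpos (Int.fract_lt_one x),
          show x - ⌊x⌋ - 1 / 2 = Int.fract x - 1 / 2 by rw [Int.fract]]
        push_cast
        simp only [Nat.factorial, Nat.cast_one, pow_one, Nat.succ_eq_add_one, Nat.mul_one, zero_add]
        field_simp
        ring
    · have h1 : 2 * q + 1 ≠ 1 := by omega
      rw [BFun, if_neg h1, hB, hf]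
      have := sinZeta_two_mul_nat_add_one hq.ne' hmem
      push_cast
      rw [this, mul_pow (2 * (Real.pi : ℂ)) I, pow_succ I (2 * q), pow_mul I 2 q, I_sq]
      have f0 : ((2 * q + 1).factorial : ℂ) ≠ 0 := by exact_mod_cast Nat.factorial_ne_zero _
      have e4 : (-1 : ℂ) ^ q ≠ 0 := by simp
      field_simp
      ring

lemma aux_sum_range_mul (c k : ℕ) (f : ℕ → ℂ) :
    ∑ n ∈ range (c * k), f n = ∑ i ∈ range k, ∑ j ∈ range c, f (c * i + j) := by
  induction k with
  | zero => simp
  | succ k ih => rw [Nat.mul_succ, Finset.sum_range_add, ih, Finset.sum_range_succ]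

lemma aux_sum_zmod (k : ℕ) [NeZero k] (f : ZMod k → ℂ) :
    ∑ n ∈ range k, f (n : ZMod k) = ∑ x : ZMod k, f x := by
  refine Finset.sum_bij' (fun n _ => (n : ZMod k)) (fun x _ => x.val) ?_ ?_ ?_ ?_ ?_
  · simp
  · intro x _; simpa using ZMod.val_lt x
  · intro n hn; exact ZMod.val_cast_of_lt (by simpa using hn)
  · simp
  · simp

lemma aux_sum_lift (c k : ℕ) [NeZero c] [NeZero k] (S H : ZMod (c * k) → ℂ) (Ψ H' : ZMod k → ℂ)
    (A : ℂ) (h1 : ∀ l : ℤ, S ((c * l : ℤ) : ZMod (c * k)) = A * Ψ (l : ZMod k))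
    (h2 : ∀ l : ℤ, ¬ (c : ℤ) ∣ l → S (l : ZMod (c * k)) = 0)
    (hH : ∀ n : ℕ, H ((c * n : ℕ) : ZMod (c * k)) = H' n) :
    ∑ l, S l * H l = A * ∑ x, Ψ x * H' x := by
  have hc : 0 < c := Nat.pos_of_ne_zero (NeZero.ne c)
  rw [← aux_sum_zmod, aux_sum_range_mul, ← aux_sum_zmod, Finset.mul_sum]
  refine Finset.sum_congr rfl fun i _ => ?_
  rw [Finset.sum_eq_single 0]
  · rw [add_zero, hH]
    have := h1 i
    push_cast at this ⊢
    rw [this]; ring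
  · intro j hj hj0
    have := h2 ((c * i + j : ℕ) : ℤ) (by
      rw [Int.natCast_dvd_natCast, ← Nat.dvd_add_iff_right (Dvd.intro _ rfl)]
      exact Nat.not_dvd_of_pos_of_lt (Nat.pos_of_ne_zero hj0) (by simpa using hj))
    rw [Int.cast_natCast] at this
    rw [this, zero_mul]
  · intro h; exact absurd (by simpa using hc) h

lemma aux_std_mul (c k : ℕ) [NeZero c] [NeZero k] (a : ℤ) :
    ZMod.stdAddChar ((c * a : ℤ) : ZMod (c * k)) = ZMod.stdAddChar (a : ZMod k) := by
  rw [ZMod.stdAddChar_coe, ZMod.stdAddChar_coe]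
  congr 1
  have : (c : ℂ) ≠ 0 := by exact_mod_cast NeZero.ne c
  have : (k : ℂ) ≠ 0 := by exact_mod_cast NeZero.ne k
  push_cast
  field_simp

lemma aux_std_mul' (c k : ℕ) [NeZero c] [NeZero k] (a : ℤ) :
    ZMod.stdAddChar ((k * a : ℤ) : ZMod (c * k)) = ZMod.stdAddChar (a : ZMod c) := by
  rw [ZMod.stdAddChar_coe, ZMod.stdAddChar_coe]
  congr 1
  have : (c : ℂ) ≠ 0 := by exact_mod_cast NeZero.ne c
  have : (k : ℂ) ≠ 0 := by exact_mod_cast NeZero.ne k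
  push_cast
  field_simp

lemma aux_inv_prim {k : ℕ} {χ : DirichletCharacter ℂ k} (h : χ.IsPrimitive) :
    (χ⁻¹).IsPrimitive := by
  have : ∀ d, (χ⁻¹).FactorsThrough d ↔ χ.FactorsThrough d := by
    have key : ∀ (ψ : DirichletCharacter ℂ k) d, ψ.FactorsThrough d → (ψ⁻¹).FactorsThrough d := by
      rintro ψ d ⟨hd, χ₀, h⟩
      exact ⟨hd, χ₀⁻¹, by rw [h, map_inv]⟩
    intro d
    exact ⟨fun h => by simpa using key _ d h, key _ d⟩
  rw [DirichletCharacter.isPrimitive_def] at h ⊢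
  refine Eq.trans ?_ h
  unfold DirichletCharacter.conductor DirichletCharacter.conductorSet
  congr 1
  ext d
  exact this d

lemma aux_conj {k : ℕ} (χ : DirichletCharacter ℂ k) : conjChar χ = χ⁻¹ := by
  rw [← MulChar.star_eq_inv]; rfl

lemma aux_gauss {k : ℕ} [NeZero k] (χ : DirichletCharacter ℂ k) (h : χ.IsPrimitive) (a : ZMod k) :
    ∑ n ∈ range k, χ (n : ZMod k) * ZMod.stdAddChar (a * n : ZMod k)
      = χ⁻¹ a * gaussSum χ ZMod.stdAddChar := by
  rw [aux_sum_zmod k (fun n => χ n * ZMod.stdAddChar (a * n : ZMod k)),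
    ← gaussSum_mulShift_of_isPrimitive _ h]
  rfl

lemma aux_GaussSumE {k : ℕ} [NeZero k] (b : ℕ) (χ : DirichletCharacter ℂ k) (h : χ.IsPrimitive) :
    GaussSumE b χ = χ⁻¹ b * gaussSum χ ZMod.stdAddChar := by
  rw [← aux_gauss χ h, GaussSumE]
  refine Finset.sum_congr rfl fun n _ => ?_
  have := ZMod.stdAddChar_coe (N := k) (b * n)
  push_cast at this
  rw [this]
  congr 2
  ring

/-- First factor. -/
lemma aux_first (b c k : ℕ) [NeZero c] [NeZero k] (hbc : Nat.Coprime b c)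
    (χ : DirichletCharacter ℂ k) (h : χ.IsPrimitive) :
    (∀ l : ℤ, ∑ m ∈ range (c * k), χ (m : ZMod k) *
      ZMod.stdAddChar ((b * m * (c * l) : ℤ) : ZMod (c * k)) = c * (χ⁻¹ l * GaussSumE b χ)) ∧
    (∀ l : ℤ, ¬ (c : ℤ) ∣ l → ∑ m ∈ range (c * k), χ (m : ZMod k) *
      ZMod.stdAddChar ((b * m * l : ℤ) : ZMod (c * k)) = 0) := by
  have split : ∀ l : ℤ, ∑ m ∈ range (c * k), χ (m : ZMod k) *
      ZMod.stdAddChar ((b * m * l : ℤ) : ZMod (c * k)) =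
      (∑ x : ZMod c, ZMod.stdAddChar (x * ((b * l : ℤ) : ZMod c))) *
      ∑ r ∈ range k, χ (r : ZMod k) * ZMod.stdAddChar ((b * r * l : ℤ) : ZMod (c * k)) := by
    intro l
    have hcomm : ∑ m ∈ range (c * k), χ (m : ZMod k) *
      ZMod.stdAddChar ((b * m * l : ℤ) : ZMod (c * k)) = ∑ m ∈ range (k * c), χ (m : ZMod k) *
      ZMod.stdAddChar ((b * m * l : ℤ) : ZMod (c * k)) := by rw [mul_comm k c]
    rw [hcomm, aux_sum_range_mul, ← aux_sum_zmod, Finset.sum_mul]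
    refine Finset.sum_congr rfl fun i _ => ?_
    rw [Finset.mul_sum]
    refine Finset.sum_congr rfl fun r _ => ?_
    have e1 : ((k * i + r : ℕ) : ZMod k) = r := by simp
    have e2 : (b * (k * i + r : ℕ) * l : ℤ) = k * (i * (b * l)) + b * r * l := by push_cast; ring
    rw [e1, e2, Int.cast_add, AddChar.map_add_eq_mul, aux_std_mul']
    push_cast
    ring
  constructor
  · intro l
    rw [split]
    have e0 : ((b * (c * l) : ℤ) : ZMod c) = 0 := by push_cast; simp
    rw [e0]
    simp only [mul_zero, AddChar.map_zero_eq_one, Finset.sum_const, Finset.card_univ, ZMod.card,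
      nsmul_eq_mul, mul_one]
    congr 1
    rw [aux_GaussSumE b χ h, ← mul_assoc, ← map_mul, ← aux_gauss χ h]
    refine Finset.sum_congr rfl fun n _ => ?_
    rw [show (b * n * (c * l) : ℤ) = c * (l * b * n) by ring, aux_std_mul]
    push_cast
    rfl
  · intro l hl
    rw [split, AddChar.sum_mulShift _ (ZMod.isPrimitive_stdAddChar c), if_neg, Nat.cast_zero, zero_mul]
    rw [ZMod.intCast_zmod_eq_zero_iff_dvd]
    intro hd
    exact hl (IsCoprime.dvd_of_dvd_mul_left
      (Nat.isCoprime_iff_coprime.2 hbc.symm) hd)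

lemma aux_neg_one {k : ℕ} (χ : DirichletCharacter ℂ k) : χ⁻¹ (-1) = χ (-1) := by
  have h : χ (-1) * χ (-1) = 1 := by rw [← map_mul]; simp
  rw [MulChar.inv_apply_eq_inv']
  exact inv_eq_of_mul_eq_one_left h


lemma aux_second (c k : ℕ) [NeZero c] [NeZero k]
    (χ : DirichletCharacter ℂ k) (h : χ.IsPrimitive) (l : ℤ) :
    ∑ n ∈ range k, χ⁻¹ (n : ZMod k) *
      ZMod.stdAddChar ((c * n * (c * l) : ℤ) : ZMod (c * k)) = χ l * GaussSumE c χ⁻¹ := by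
  have h' := aux_inv_prim h
  rw [aux_GaussSumE c _ h', inv_inv, ← mul_assoc, ← map_mul]
  have := aux_gauss _ h' ((l : ZMod k) * c)
  rw [inv_inv] at this
  rw [← this]
  refine Finset.sum_congr rfl fun n _ => ?_
  rw [show (c * n * (c * l) : ℤ) = c * (l * c * n) by ring, aux_std_mul]
  push_cast
  rfl

open scoped ZMod in
open HurwitzZeta in
lemma aux_main (b c : ℕ) [NeZero c] (hbc : Nat.Coprime b c) (p : ℕ) (hp : 1 ≤ p)
    (k : ℕ) [NeZero k] (χ₁ χ₂ : DirichletCharacter ℂ k) (hne : χ₁ ≠ χ₂)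
    (hprim₁ : χ₁.IsPrimitive) (hprim₂ : χ₂.IsPrimitive) :
    ∑ m ∈ range (c * k), ∑ n ∈ range k, χ₁ (m : ZMod k) * χ₂⁻¹ (n : ZMod k) *
      (BFun p (((b * m + c * n : ℕ) : ℝ) / (c * k : ℕ)) : ℂ) =
    -((p.factorial : ℂ) / (2 * Real.pi * Complex.I) ^ p) *
      ((1 + (-1 : ℂ) ^ p * χ₁ (-1) * χ₂ (-1)) * (((c * k : ℕ) : ℂ) ^ (-(p : ℂ)) *
        (c * (GaussSumE b χ₁ * GaussSumE c χ₂⁻¹)) * ((k : ℂ) ^ (p : ℂ) *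
        DirichletCharacter.LFunction (χ₁⁻¹ * χ₂) p))) := by
  classical
  set w : ℕ × ℕ → ℂ := fun q => χ₁ (q.1 : ZMod k) * χ₂⁻¹ (q.2 : ZMod k) with hw
  set u : ℕ × ℕ → ZMod (c * k) := fun q => ((b * q.1 + c * q.2 : ℕ) : ZMod (c * k)) with hu
  set I := range (c * k) ×ˢ range k with hI
  set Φ : ZMod (c * k) → ℂ := fun j => ∑ q ∈ I, if u q = j then w q else 0 with hΦdef
  have hΦ : ∀ F : ZMod (c * k) → ℂ, ∑ j, Φ j * F j = ∑ q ∈ I, w q * F (u q) := by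
    intro F
    simp only [hΦdef, Finset.sum_mul]
    rw [Finset.sum_comm]
    refine Finset.sum_congr rfl fun q _ => ?_
    simp
  set Ψ : DirichletCharacter ℂ k := χ₁⁻¹ * χ₂ with hΨ
  set A : ℂ := c * (GaussSumE b χ₁ * GaussSumE c χ₂⁻¹) with hA
  -- the transform
  have hS : ∀ l : ℤ, 𝓕 Φ (-(l : ZMod (c * k))) =
      (∑ m ∈ range (c * k), χ₁ (m : ZMod k) *
        ZMod.stdAddChar ((b * m * l : ℤ) : ZMod (c * k))) *
      (∑ n ∈ range k, χ₂⁻¹ (n : ZMod k) *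
        ZMod.stdAddChar ((c * n * l : ℤ) : ZMod (c * k))) := by
    intro l
    rw [ZMod.dft_apply]
    simp only [smul_eq_mul]
    have := hΦ (fun j => ZMod.stdAddChar (-(j * -(l : ZMod (c * k)))))
    simp only [mul_comm (Φ _)] at this
    rw [this, Finset.sum_mul_sum, hI, Finset.sum_product]
    refine Finset.sum_congr rfl fun m _ => Finset.sum_congr rfl fun n _ => ?_
    have e : -(u (m, n) * -(l : ZMod (c * k)))
        = ((b * m * l : ℤ) : ZMod (c * k)) + ((c * n * l : ℤ) : ZMod (c * k)) := by
      simp only [hu]; push_cast; ring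
    rw [e, AddChar.map_add_eq_mul]
    simp only [hw]
    ring
  have hS1 : ∀ l : ℤ, 𝓕 Φ (-((c * l : ℤ) : ZMod (c * k))) = A * Ψ (l : ZMod k) := by
    intro l
    rw [hS, (aux_first b c k hbc χ₁ hprim₁).1, aux_second c k χ₂ hprim₂, hΨ, MulChar.mul_apply, hA]
    ring
  have hS2 : ∀ l : ℤ, ¬ (c : ℤ) ∣ l → 𝓕 Φ (-(l : ZMod (c * k))) = 0 := by
    intro l hl
    rw [hS, (aux_first b c k hbc χ₁ hprim₁).2 l hl, zero_mul]
  have hT1 : ∀ l : ℤ, 𝓕 Φ ((c * l : ℤ) : ZMod (c * k)) = (A * Ψ (-1)) * Ψ (l : ZMod k) := by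
    intro l
    have := hS1 (-l)
    rw [mul_neg, Int.cast_neg, neg_neg] at this
    rw [this, Int.cast_neg, ← neg_one_mul, map_mul]; ring
  have hT2 : ∀ l : ℤ, ¬ (c : ℤ) ∣ l → 𝓕 Φ (l : ZMod (c * k)) = 0 := by
    intro l hl
    have := hS2 (-l) (by simpa using hl)
    rwa [Int.cast_neg, neg_neg] at this
  have hΨ1 : Ψ ≠ 1 := by
    intro h
    rw [hΨ, inv_mul_eq_one] at h
    exact hne h
  have hΦ0 : Φ 0 = 0 := by
    have h1 := congr_fun (ZMod.dft_dft Φ) 0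
    rw [ZMod.dft_apply_zero] at h1
    have h2 := aux_sum_lift c k (𝓕 Φ) (fun _ => 1) Ψ (fun _ => 1) _ hT1 hT2 (fun _ => rfl)
    simp only [mul_one] at h2
    rw [h2, MulChar.sum_eq_zero_of_ne_one hΨ1, mul_zero, neg_zero, smul_eq_mul] at h1
    exact (mul_eq_zero.1 h1.symm).resolve_left (by exact_mod_cast NeZero.ne (c * k))
  have hk0 : (k : ℂ) ≠ 0 := by exact_mod_cast NeZero.ne k
  have hH : ∀ n : ℕ, hurwitzZeta (ZMod.toAddCircle ((c * n : ℕ) : ZMod (c * k))) (p : ℂ) =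
      hurwitzZeta (ZMod.toAddCircle (n : ZMod k)) (p : ℂ) := by
    intro n
    rw [ZMod.toAddCircle_natCast, ZMod.toAddCircle_natCast]
    congr 2
    have : (c : ℝ) ≠ 0 := by exact_mod_cast NeZero.ne c
    have : (k : ℝ) ≠ 0 := by exact_mod_cast NeZero.ne k
    push_cast
    field_simp
  have hL : ∑ x, Ψ x * hurwitzZeta (ZMod.toAddCircle x) (p : ℂ)
      = (k : ℂ) ^ (p : ℂ) * DirichletCharacter.LFunction Ψ p := by
    rw [DirichletCharacter.LFunction, ZMod.LFunction, ← mul_assoc,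
      ← Complex.cpow_add _ _ hk0, add_neg_cancel, Complex.cpow_zero, one_mul]
  have hL1 : ∑ j, Φ j * expZeta (-(ZMod.toAddCircle j)) p =
      ((c * k : ℕ) : ℂ) ^ (-(p : ℂ)) * ((A * Ψ (-1)) * ((k : ℂ) ^ (p : ℂ) *
        DirichletCharacter.LFunction Ψ p)) := by
    have h := ZMod.LFunction_dft Φ (s := p) (.inl hΦ0)
    simp only [map_neg] at h
    rw [← h, ZMod.LFunction, aux_sum_lift c k (𝓕 Φ) _ Ψ
      (fun x => hurwitzZeta (ZMod.toAddCircle x) (p : ℂ)) _ hT1 hT2 hH, hL]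
  have hL2 : ∑ j, Φ j * expZeta (ZMod.toAddCircle j) p =
      ((c * k : ℕ) : ℂ) ^ (-(p : ℂ)) * (A * ((k : ℂ) ^ (p : ℂ) *
        DirichletCharacter.LFunction Ψ p)) := by
    have h := ZMod.LFunction_dft (fun j => Φ (-j)) (s := p) (.inl (by simpa using hΦ0))
    have h' : ∑ j, Φ (-j) * expZeta (ZMod.toAddCircle (-j)) (p : ℂ)
        = ∑ j, Φ j * expZeta (ZMod.toAddCircle j) p :=
      Equiv.sum_comp (Equiv.neg (ZMod (c * k))) (fun j => Φ j * expZeta (ZMod.toAddCircle j) p)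
    rw [h'] at h
    rw [← h, ZMod.dft_comp_neg, ZMod.LFunction,
      aux_sum_lift c k (fun l => 𝓕 Φ (-l)) _ Ψ
      (fun x => hurwitzZeta (ZMod.toAddCircle x) (p : ℂ)) _ hS1 hS2 hH, hL]
  have hΨm : Ψ (-1) = χ₁ (-1) * χ₂ (-1) := by
    rw [hΨ, MulChar.mul_apply, aux_neg_one]
  have hfin := hΦ (fun j => -((p.factorial : ℂ) / (2 * Real.pi * Complex.I) ^ p) *
      (expZeta (ZMod.toAddCircle j) p + (-1) ^ p * expZeta (-(ZMod.toAddCircle j)) p))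
  have hleft : ∑ m ∈ range (c * k), ∑ n ∈ range k, χ₁ (m : ZMod k) * χ₂⁻¹ (n : ZMod k) *
      (BFun p (((b * m + c * n : ℕ) : ℝ) / (c * k : ℕ)) : ℂ) = ∑ q ∈ I, w q *
      (-((p.factorial : ℂ) / (2 * Real.pi * Complex.I) ^ p) *
      (expZeta (ZMod.toAddCircle (u q)) p + (-1) ^ p * expZeta (-(ZMod.toAddCircle (u q))) p)) := by
    rw [hI, Finset.sum_product]
    refine Finset.sum_congr rfl fun m _ => Finset.sum_congr rfl fun n _ => ?_
    rw [aux_BFun p hp, ← ZMod.toAddCircle_natCast]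
  rw [hleft, ← hfin]
  have : ∀ j, Φ j * (-((p.factorial : ℂ) / (2 * Real.pi * Complex.I) ^ p) *
      (expZeta (ZMod.toAddCircle j) p + (-1) ^ p * expZeta (-(ZMod.toAddCircle j)) p))
      = -((p.factorial : ℂ) / (2 * Real.pi * Complex.I) ^ p) *
        (Φ j * expZeta (ZMod.toAddCircle j) p
          + (-1) ^ p * (Φ j * expZeta (-(ZMod.toAddCircle j)) p)) := by
    intro j; ring
  simp only [this]
  rw [← Finset.mul_sum, Finset.sum_add_distrib, ← Finset.mul_sum, hL1, hL2, hΨm]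
  ring


/-- Evaluation of `Σ_{n=1}^{ck−1} χ₁(n) B̄_{p,χ₂}(bn/c)` in terms of Gauss sums and the
Dirichlet L-function of `χ̄₁χ₂`. -/
theorem sum_char_BFunChar_eq_LFunction (b c : ℕ) (hb : 0 < b) (hc : 0 < c)
    (hbc : Nat.Coprime b c) (p : ℕ) (hp : 1 ≤ p)
    (k : ℕ) [NeZero k] (χ₁ χ₂ : DirichletCharacter ℂ k) (hne : χ₁ ≠ χ₂)
    (h₁ : χ₁ ≠ 1) (h₂ : χ₂ ≠ 1) (hprim₁ : χ₁.IsPrimitive) (hprim₂ : χ₂.IsPrimitive) :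
    ∑ n ∈ Finset.Icc 1 (c * k - 1), χ₁ (n : ZMod k) * BFunChar χ₂ p (((b : ℝ) * n) / c) =
      -(1 + (-1 : ℂ) ^ p * χ₁ (-1) * χ₂ (-1)) *
        ((p.factorial : ℂ) / (2 * Real.pi * Complex.I) ^ p) * ((k : ℂ) / c) ^ (p - 1) *
        GaussSumE b χ₁ * GaussSumE c (conjChar χ₂) *
        DirichletCharacter.LFunction (conjChar χ₁ * χ₂) p := by
  have : NeZero c := ⟨hc.ne'⟩
  have hk1 : k ≠ 1 := by
    rintro rfl
    exact h₁ (Subsingleton.elim _ _)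
  have hkpos : 0 < k := Nat.pos_of_ne_zero (NeZero.ne k)
  have : Fact (1 < k) := ⟨by omega⟩
  have hIcc : ∀ (N : ℕ) (f : ℕ → ℂ), 0 < N → f 0 = 0 →
      ∑ n ∈ Finset.Icc 1 (N - 1), f n = ∑ n ∈ range N, f n := by
    intro N f hN hf
    refine Finset.sum_subset ?_ ?_
    · intro n hn
      simp only [Finset.mem_Icc, Finset.mem_range] at hn ⊢
      omega
    · intro n hn hn'
      simp only [Finset.mem_Icc, Finset.mem_range] at hn hn'
      have : n = 0 := by omega
      rw [this, hf]
  have hc0 : (c : ℝ) ≠ 0 := by exact_mod_cast hc.ne'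
  have hk0 : (k : ℝ) ≠ 0 := by exact_mod_cast hkpos.ne'
  have hc0' : (c : ℂ) ≠ 0 := by exact_mod_cast hc.ne'
  have hk0' : (k : ℂ) ≠ 0 := by exact_mod_cast hkpos.ne'
  have hz : ∀ χ : DirichletCharacter ℂ k, χ 0 = 0 := fun χ => MulChar.map_zero χ
  have hmain := aux_main b c hbc p hp k χ₁ χ₂ hne hprim₁ hprim₂
  rw [hIcc _ _ (by positivity) (by simp [hz])]
  have hB : ∀ m : ℕ, χ₁ (m : ZMod k) * BFunChar χ₂ p (((b : ℝ) * m) / c) =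
      (k : ℂ) ^ (p - 1) * ∑ n ∈ range k, χ₁ (m : ZMod k) * χ₂⁻¹ (n : ZMod k) *
      (BFun p (((b * m + c * n : ℕ) : ℝ) / (c * k : ℕ)) : ℂ) := by
    intro m
    rw [BFunChar, hIcc _ _ hkpos (by simp [hz]), show (p : ℤ) - 1 = ((p - 1 : ℕ) : ℤ) by omega,
      zpow_natCast, mul_left_comm, Finset.mul_sum]
    congr 1
    refine Finset.sum_congr rfl fun n _ => ?_
    rw [← MulChar.star_apply', mul_assoc]
    congr 3
    congr 1
    push_cast
    field_simp
    ring
  simp only [hB]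
  rw [← Finset.mul_sum, hmain, aux_conj, aux_conj]
  obtain ⟨q, rfl⟩ : ∃ q, p = q + 1 := ⟨p - 1, by omega⟩
  rw [Complex.cpow_neg, Complex.cpow_natCast, Complex.cpow_natCast]
  push_cast
  try simp only [Nat.add_sub_cancel]
  have hπ : (Real.pi : ℂ) ≠ 0 := by exact_mod_cast Real.pi_ne_zero
  generalize (2 * (Real.pi : ℂ) * Complex.I) ^ (q + 1) = P
  generalize (-1 : ℂ) ^ (q + 1) = s
  rw [div_pow, mul_pow, pow_succ (c : ℂ), pow_succ (k : ℂ)]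
  field_simp
end
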